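/- arXiv:2208.04111 — 4 statements merged into one kernel-verified Lean document; each statement's English description precedes it below -/
import Mathlib

section
/- Let d ≥ 2 be an integer and let G be a finite graph on a vertex set V with |V| ≥ d+1. Suppose that every nonempty U ⊆ V with |N_G(U)| ≤ d−1 and U ∪ N_G(U) ≠ V satisfies |U| ≤ 6, and let B ⊆ V be the union of all such sets U. If G' is a graph on the same vertex set V with E(G) ⊆ E(G') in which every vertex of B has degree at least d+5, then G' is d-connected. -/
open Finset SimpleGraph
open scoped Classical

noncomputable section

/-- The external neighbourhood `N_G(U) = (⋃_{u ∈ U} N_G(u)) ∖ U` of a vertex set `U`. -/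
def extNbhd {V : Type*} [Fintype V] [DecidableEq V] (G : SimpleGraph V) (U : Finset V) :
    Finset V :=
  Finset.univ.filter (fun v => v ∉ U ∧ ∃ u ∈ U, G.Adj u v)

/-- A graph `G` is `d`-connected if it has at least `d + 1` vertices and removing any
set of at most `d − 1` vertices leaves a connected graph. -/
def IsKConnected {V : Type*} [Fintype V] (d : ℕ) (G : SimpleGraph V) : Prop :=
  d + 1 ≤ Fintype.card V ∧
    ∀ S : Finset V, S.card ≤ d - 1 → (G.induce ((↑S : Set V)ᶜ)).Connected

/-!
If deleting `S` with `|S| < d` disconnects `G'`, let `U` be a component of the rest. Then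
`N_{G'}(U) ⊆ S`, and `U ∪ N_{G'}(U)` misses the other components. Since `N_G(U) ⊆ N_{G'}(U)`, the
set `U` satisfies the same two conditions in `G`. But a vertex of `U` has all its `G'`-neighbours
in `U ∪ N_{G'}(U)`, hence `G'`-degree at most `|U| + d - 2`, so at most `d + 4` when `|U| ≤ 6`.
-/

section ExternalNeighbourhood

variable {V : Type*} [Fintype V] [DecidableEq V] {G : SimpleGraph V} {U : Finset V} {v : V}

lemma mem_extNbhd : v ∈ extNbhd G U ↔ v ∉ U ∧ ∃ u ∈ U, G.Adj u v := by
  simp [extNbhd]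

lemma extNbhd_mono {H : SimpleGraph V} (hGH : G ≤ H) : extNbhd G U ⊆ extNbhd H U := by
  intro v hv
  obtain ⟨hvU, u, hu, huv⟩ := mem_extNbhd.1 hv
  exact mem_extNbhd.2 ⟨hvU, u, hu, hGH huv⟩

lemma neighborFinset_subset_erase_union_extNbhd [Fintype (G.neighborSet v)] (hv : v ∈ U) :
    G.neighborFinset v ⊆ U.erase v ∪ extNbhd G U := by
  intro w hw
  have hvw : G.Adj v w := (G.mem_neighborFinset v w).1 hw
  by_cases hwU : w ∈ U
  · exact mem_union_left _ (mem_erase.2 ⟨hvw.ne', hwU⟩)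
  · exact mem_union_right _ (mem_extNbhd.2 ⟨hwU, v, hv, hvw⟩)

lemma degree_lt_card_add_card_extNbhd [Fintype (G.neighborSet v)] (hv : v ∈ U) :
    G.degree v < #U + #(extNbhd G U) :=
  calc G.degree v ≤ #(U.erase v ∪ extNbhd G U) :=
        card_le_card (neighborFinset_subset_erase_union_extNbhd hv)
    _ ≤ #(U.erase v) + #(extNbhd G U) := card_union_le _ _
    _ < #U + #(extNbhd G U) := Nat.add_lt_add_right (card_erase_lt_of_mem hv) _

lemma extNbhd_componentCompl_subset {S : Finset V} (C : G.ComponentCompl S) :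
    extNbhd G (C : Set V).toFinset ⊆ S := by
  intro v hv
  obtain ⟨hvC, u, hu, huv⟩ := mem_extNbhd.1 hv
  by_contra hvS
  exact hvC (Set.mem_toFinset.2 (C.mem_of_adj u v (Set.mem_toFinset.1 hu) hvS huv))

lemma exists_extNbhd_subset_of_not_preconnected {S : Finset V}
    (hS : ¬ (G.induce (S : Set V)ᶜ).Preconnected) :
    ∃ U : Finset V, U.Nonempty ∧ extNbhd G U ⊆ S ∧ U ∪ extNbhd G U ≠ univ := by
  simp only [Preconnected, not_forall] at hS
  obtain ⟨x, y, hxy⟩ := hS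
  let C : G.ComponentCompl S := G.componentComplMk x.2
  have hyC : y.1 ∉ C := fun ⟨_, hC⟩ => hxy (ConnectedComponent.eq.1 hC.symm)
  refine ⟨(C : Set V).toFinset, Set.toFinset_nonempty.2 C.nonempty,
    extNbhd_componentCompl_subset C, fun huniv => ?_⟩
  rcases mem_union.1 (huniv ▸ mem_univ y.1) with hy | hy
  · exact hyC (Set.mem_toFinset.1 hy)
  · exact y.2 (extNbhd_componentCompl_subset C hy)

theorem isKConnected_of_forall_le_card_extNbhd {d : ℕ} (hd : d ≠ 0)
    (hcard : d + 1 ≤ Fintype.card V)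
    (hN : ∀ U : Finset V, U.Nonempty → U ∪ extNbhd G U ≠ univ → d ≤ #(extNbhd G U)) :
    IsKConnected d G := by
  refine ⟨hcard, fun S hS => (connected_iff _).2 ⟨?_, ?_⟩⟩
  · by_contra hdisc
    obtain ⟨U, hU, hUS, huniv⟩ := exists_extNbhd_subset_of_not_preconnected hdisc
    have hdS : d ≤ #S := (hN U hU huniv).trans (card_le_card hUS)
    lia
  · obtain ⟨v, -, hv⟩ : ∃ v ∈ univ, v ∉ S :=
      exists_mem_notMem_of_card_lt_card (by rw [card_univ]; lia)
    exact ⟨v, hv⟩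

end ExternalNeighbourhood

theorem statement7_general {V : Type*} [Fintype V] [DecidableEq V] {d : ℕ} (hd : d ≠ 0)
    {G G' : SimpleGraph V} [DecidableRel G'.Adj] (hcard : d + 1 ≤ Fintype.card V) (hle : G ≤ G')
    (hdeg : ∀ U : Finset V, U.Nonempty → #(extNbhd G U) ≤ d - 1 → U ∪ extNbhd G U ≠ univ →
      ∃ v ∈ U, d + #U ≤ G'.degree v + 1) :
    IsKConnected d G' := by
  refine isKConnected_of_forall_le_card_extNbhd hd hcard fun U hU huniv => ?_
  by_contra! hlt
  have hsub : extNbhd G U ⊆ extNbhd G' U := extNbhd_mono hle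
  have hN : #(extNbhd G U) ≤ d - 1 := (card_le_card hsub).trans (Nat.le_sub_one_of_lt hlt)
  have hneU : U ∪ extNbhd G U ≠ univ := fun h =>
    huniv (univ_subset_iff.1 (h ▸ union_subset_union_right hsub))
  obtain ⟨v, hvU, hdv⟩ := hdeg U hU hN hneU
  have hdv' : G'.degree v < #U + #(extNbhd G' U) := degree_lt_card_add_card_extNbhd hvU
  lia

/-- Let `d ≥ 2` and let `G` be a finite graph on a vertex set `V` with
`|V| ≥ d + 1`.  Suppose that every nonempty `U ⊆ V` with `|N_G(U)| ≤ d − 1` and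
`U ∪ N_G(U) ≠ V` satisfies `|U| ≤ 6`, and let `B` be the union of all such sets `U`.
If `G'` is a graph on the same vertex set containing all edges of `G` in which every
vertex of `B` has degree at least `d + 5`, then `G'` is `d`-connected. -/
theorem statement7 {V : Type*} [Fintype V] [DecidableEq V] (d : ℕ) (hd : 2 ≤ d)
    (G G' : SimpleGraph V) (hcard : d + 1 ≤ Fintype.card V)
    (hsmall : ∀ U : Finset V, U.Nonempty → (extNbhd G U).card ≤ d - 1 →
      U ∪ extNbhd G U ≠ Finset.univ → U.card ≤ 6)
    (B : Finset V)
    (hB : ∀ v, v ∈ B ↔ ∃ U : Finset V, U.Nonempty ∧ (extNbhd G U).card ≤ d - 1 ∧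
      U ∪ extNbhd G U ≠ Finset.univ ∧ v ∈ U)
    (hle : G ≤ G')
    (hdeg : ∀ v ∈ B, d + 5 ≤ (Finset.univ.filter (fun u => G'.Adj v u)).card) :
    IsKConnected d G' := by
  refine statement7_general (by lia) hcard hle fun U hU hN huniv => ?_
  obtain ⟨v, hvU⟩ := hU
  have hU6 : #U ≤ 6 := hsmall U ⟨v, hvU⟩ hN huniv
  have hdv : d + 5 ≤ G'.degree v := by
    rw [← card_neighborFinset_eq_degree, neighborFinset_eq_filter]
    exact hdeg v ((hB v).2 ⟨U, ⟨v, hvU⟩, hN, huniv, hvU⟩)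
  exact ⟨v, hvU, by lia⟩

end
end

section
/- Let p = (log n)/n and let G(n,p) denote the binomial random graph on n labelled vertices in which every pair of vertices forms an edge independently with probability p. Then asymptotically almost surely there do not exist two disjoint vertex sets A and B with |A| = |B| = ω² such that at least ω⁴/2 edges of G(n,p) join A to B. -/
open Filter SimpleGraph MeasureTheory
open scoped Classical ENNReal

noncomputable section

/-- The Bernoulli measure on `Bool` with success probability `p`. -/
def bern (p : ℝ≥0∞) : Measure Bool :=
  p • Measure.dirac true + (1 - p) • Measure.dirac false

/-- The binomial random graph `G(n, p)`: every edge of the complete graph on `Fin n` is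
present independently with probability `p`; a sample is the indicator function of the
set of present edges. -/
def gnp (n : ℕ) (p : ℝ) : Measure (((completeGraph (Fin n)).edgeSet) → Bool) :=
  Measure.pi (fun _ => bern (ENNReal.ofReal p))

/-- The number of present edges joining `A` to `B` in the sample `f` of `G(n,p)`. -/
def edgesBetween {n : ℕ} (f : ((completeGraph (Fin n)).edgeSet) → Bool)
    (A B : Finset (Fin n)) : ℕ :=
  (Finset.univ.filter (fun e : ((completeGraph (Fin n)).edgeSet) =>
    f e = true ∧ ∃ a ∈ A, ∃ b ∈ B, (e : Sym2 (Fin n)) = s(a, b))).card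

/-!
The proof is a first moment argument. There are at most `n ^ (2 * k)` pairs of `k`-sets, and a given
pair is joined by at least `m = ⌈k ^ 2 / 2⌉` edges with probability at most
`2 ^ (k ^ 2) * p ^ m ≤ (4 * p) ^ m`, by a union bound over the choice of `m` such edges. So the
probability that such a pair exists is at most `n ^ (2 * k) * (4 * p) ^ m`, whose square is at most
`(n ^ 4 * (4 * p) ^ k) ^ k` as soon as `4 * p ≤ 1`. For `p = log n / n` this tends to zero once
`k ≥ 5`.
-/

section BernoulliProduct

variable {ι : Type*} [Fintype ι] {p : ℝ≥0∞}

lemma isProbabilityMeasure_bern (hp : p ≤ 1) : IsProbabilityMeasure (bern p) :=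
  ⟨by simp [bern, add_tsub_cancel_of_le hp]⟩

lemma bern_singleton_true : bern p {true} = p := by
  simp [bern]

lemma pi_bern_setOf_forall_eq_true (hp : p ≤ 1) (S : Finset ι) :
    Measure.pi (fun _ : ι => bern p) {f | ∀ i ∈ S, f i = true} = p ^ S.card := by
  have := isProbabilityMeasure_bern hp
  have hcylinder : {f : ι → Bool | ∀ i ∈ S, f i = true} =
      Set.univ.pi fun i => if i ∈ S then {true} else Set.univ := by
    ext f
    refine (forall_congr' fun i => ?_).trans Set.mem_univ_pi.symm
    split_ifs with hi <;> simp [hi]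
  simp only [hcylinder, Measure.pi_pi, apply_ite (bern p), bern_singleton_true, measure_univ,
    Finset.prod_ite_mem, Finset.univ_inter, Finset.prod_const]

lemma pi_bern_setOf_le_card_filter_le (hp : p ≤ 1) (T : Finset ι) (m : ℕ) :
    Measure.pi (fun _ : ι => bern p) {f | m ≤ (T.filter fun i => f i = true).card} ≤
      T.card.choose m * p ^ m := by
  have hcover : {f : ι → Bool | m ≤ (T.filter fun i => f i = true).card} ⊆
      ⋃ S ∈ T.powersetCard m, {f | ∀ i ∈ S, f i = true} := by
    intro f hf
    obtain ⟨S, hS, hcard⟩ := Finset.exists_subset_card_eq hf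
    exact Set.mem_biUnion
      (Finset.mem_powersetCard.2 ⟨hS.trans (Finset.filter_subset _ _), hcard⟩)
      fun i hi => (Finset.mem_filter.1 (hS hi)).2
  calc Measure.pi (fun _ : ι => bern p) {f | m ≤ (T.filter fun i => f i = true).card}
      ≤ ∑ S ∈ T.powersetCard m, Measure.pi (fun _ : ι => bern p) {f | ∀ i ∈ S, f i = true} :=
        (measure_mono hcover).trans (measure_biUnion_finset_le _ _)
    _ = ∑ _ ∈ T.powersetCard m, p ^ m := Finset.sum_congr rfl fun S hS => by
        rw [pi_bern_setOf_forall_eq_true hp, (Finset.mem_powersetCard.1 hS).2]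
    _ = T.card.choose m * p ^ m := by
        rw [Finset.sum_const, Finset.card_powersetCard, nsmul_eq_mul]

end BernoulliProduct

section RandomGraph

variable {n : ℕ} {p : ℝ}

lemma isProbabilityMeasure_gnp (hp : p ≤ 1) : IsProbabilityMeasure (gnp n p) := by
  have := isProbabilityMeasure_bern (ENNReal.ofReal_le_one.2 hp)
  unfold gnp
  infer_instance

/-- The edges of the complete graph on `Fin n` that join `A` to `B`. The sets may overlap; an edge
inside `A ∩ B` is counted once. -/
def completeEdgesBetween (A B : Finset (Fin n)) : Finset (completeGraph (Fin n)).edgeSet :=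
  Finset.univ.filter fun e => ∃ a ∈ A, ∃ b ∈ B, (e : Sym2 (Fin n)) = s(a, b)

lemma card_completeEdgesBetween_le (A B : Finset (Fin n)) :
    (completeEdgesBetween A B).card ≤ A.card * B.card := by
  have hsub : (completeEdgesBetween A B).image Subtype.val ⊆
      (A ×ˢ B).image fun x => s(x.1, x.2) := by
    refine Finset.image_subset_iff.2 fun e he => ?_
    obtain ⟨a, ha, b, hb, hab⟩ := (Finset.mem_filter.1 he).2
    exact Finset.mem_image.2 ⟨(a, b), Finset.mk_mem_product ha hb, hab.symm⟩
  calc (completeEdgesBetween A B).card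
      = ((completeEdgesBetween A B).image Subtype.val).card :=
        (Finset.card_image_of_injective _ Subtype.val_injective).symm
    _ ≤ (A ×ˢ B).card := (Finset.card_le_card hsub).trans Finset.card_image_le
    _ = A.card * B.card := Finset.card_product A B

lemma edgesBetween_eq_card_filter (f : (completeGraph (Fin n)).edgeSet → Bool)
    (A B : Finset (Fin n)) :
    edgesBetween f A B = ((completeEdgesBetween A B).filter fun e => f e = true).card := by
  simp only [edgesBetween, completeEdgesBetween, Finset.filter_filter, and_comm]

lemma gnp_setOf_le_edgesBetween_le (hp : p ≤ 1) (A B : Finset (Fin n)) (m : ℕ) :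
    gnp n p {f | m ≤ edgesBetween f A B} ≤
      (A.card * B.card).choose m * ENNReal.ofReal p ^ m := by
  simp only [edgesBetween_eq_card_filter]
  refine (pi_bern_setOf_le_card_filter_le (ENNReal.ofReal_le_one.2 hp) _ m).trans ?_
  gcongr
  exact card_completeEdgesBetween_le A B

lemma gnp_setOf_exists_le_edgesBetween_le (hp : p ≤ 1) (a b m : ℕ) :
    gnp n p {f | ∃ A B : Finset (Fin n), A.card = a ∧ B.card = b ∧ m ≤ edgesBetween f A B} ≤
      n.choose a * n.choose b * ((a * b).choose m * ENNReal.ofReal p ^ m) := by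
  let pairs := (Finset.univ : Finset (Fin n)).powersetCard a ×ˢ
    (Finset.univ : Finset (Fin n)).powersetCard b
  have hcover : {f | ∃ A B : Finset (Fin n), A.card = a ∧ B.card = b ∧ m ≤ edgesBetween f A B} ⊆
      ⋃ P ∈ pairs, {f | m ≤ edgesBetween f P.1 P.2} := by
    rintro f ⟨A, B, hA, hB, hm⟩
    exact Set.mem_biUnion (x := (A, B)) (by simp [pairs, hA, hB]) hm
  have hpair : ∀ P ∈ pairs, gnp n p {f | m ≤ edgesBetween f P.1 P.2} ≤
      (a * b).choose m * ENNReal.ofReal p ^ m := by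
    rintro ⟨A, B⟩ hP
    obtain ⟨rfl, rfl⟩ : A.card = a ∧ B.card = b := by
      simpa only [pairs, Finset.mem_product, Finset.mem_powersetCard_univ] using hP
    exact gnp_setOf_le_edgesBetween_le hp A B m
  refine ((measure_mono hcover).trans (measure_biUnion_finset_le _ _)).trans
    ((Finset.sum_le_card_nsmul _ _ _ hpair).trans_eq ?_)
  simp [pairs, nsmul_eq_mul]

/-- Some two `k`-sets of vertices, possibly overlapping, are joined by at least half of the `k ^ 2`
conceivable edges; the inequality is doubled to stay in `ℕ`. -/
def HasDensePair (f : (completeGraph (Fin n)).edgeSet → Bool) (k : ℕ) : Prop :=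
  ∃ A B : Finset (Fin n), A.card = k ∧ B.card = k ∧ k ^ 2 ≤ 2 * edgesBetween f A B

lemma gnp_setOf_hasDensePair_le (hp : p ≤ 1) (k : ℕ) :
    gnp n p {f | HasDensePair f k} ≤
      (n : ℝ≥0∞) ^ (2 * k) * (4 * ENNReal.ofReal p) ^ ((k ^ 2 + 1) / 2) := by
  set m := (k ^ 2 + 1) / 2
  have hchoose : (k * k).choose m ≤ 4 ^ m :=
    calc (k * k).choose m ≤ 2 ^ (k * k) := Nat.choose_le_two_pow _ _
      _ ≤ 2 ^ (2 * m) := Nat.pow_le_pow_right two_pos (by rw [← sq]; omega)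
      _ = 4 ^ m := by rw [pow_mul]; norm_num
  have hsub : {f : (completeGraph (Fin n)).edgeSet → Bool | HasDensePair f k} ⊆
      {f | ∃ A B : Finset (Fin n), A.card = k ∧ B.card = k ∧ m ≤ edgesBetween f A B} := by
    rintro f ⟨A, B, hA, hB, h⟩
    exact ⟨A, B, hA, hB, by omega⟩
  calc gnp n p {f | HasDensePair f k}
      ≤ n.choose k * n.choose k * ((k * k).choose m * ENNReal.ofReal p ^ m) :=
        (measure_mono hsub).trans (gnp_setOf_exists_le_edgesBetween_le hp k k m)
    _ ≤ (n : ℝ≥0∞) ^ k * (n : ℝ≥0∞) ^ k * (4 ^ m * ENNReal.ofReal p ^ m) := by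
        gcongr
        · exact_mod_cast Nat.choose_le_pow n k
        · exact_mod_cast Nat.choose_le_pow n k
        · exact_mod_cast hchoose
    _ = (n : ℝ≥0∞) ^ (2 * k) * (4 * ENNReal.ofReal p) ^ m := by
        rw [← pow_add, ← two_mul, mul_pow]

end RandomGraph

lemma sq_pow_mul_pow_le {R : Type*} [CommSemiring R] [LinearOrder R] [IsOrderedRing R]
    {x q : R} {r k m : ℕ} (hx : 1 ≤ x) (hq : 0 ≤ q) (hxq : x ^ 4 * q ^ r < 1) (hrk : r ≤ k)
    (hm : k ^ 2 ≤ 2 * m) :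
    (x ^ (2 * k) * q ^ m) ^ 2 ≤ x ^ 4 * q ^ r := by
  have hx0 : 0 ≤ x := zero_le_one.trans hx
  have hqr : q ^ r < 1 :=
    (le_mul_of_one_le_left (pow_nonneg hq r) (one_le_pow₀ hx)).trans_lt hxq
  have hq1 : q ≤ 1 := le_of_not_gt fun h => hqr.not_ge (one_le_pow₀ h.le)
  have hk : k ≠ 0 := by
    rintro rfl
    rw [Nat.le_zero.1 hrk, pow_zero] at hqr
    exact hqr.false
  have hxqk : x ^ 4 * q ^ k ≤ x ^ 4 * q ^ r :=
    mul_le_mul_of_nonneg_left (pow_le_pow_of_le_one hq hq1 hrk) (pow_nonneg hx0 4)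
  calc (x ^ (2 * k) * q ^ m) ^ 2 = x ^ (4 * k) * q ^ (2 * m) := by ring
    _ ≤ x ^ (4 * k) * q ^ k ^ 2 :=
        mul_le_mul_of_nonneg_left (pow_le_pow_of_le_one hq hq1 hm) (pow_nonneg hx0 _)
    _ = (x ^ 4 * q ^ k) ^ k := by ring
    _ ≤ x ^ 4 * q ^ k :=
        pow_le_of_le_one (mul_nonneg (pow_nonneg hx0 4) (pow_nonneg hq k))
          (hxqk.trans hxq.le) hk
    _ ≤ x ^ 4 * q ^ r := hxqk

section Asymptotics

variable {p : ℕ → ℝ}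

lemma tendsto_ofReal_pow_four_mul_pow {r : ℕ} (hp0 : ∀ n, 0 ≤ p n)
    (hp : Tendsto (fun n : ℕ => (n : ℝ) ^ 4 * p n ^ r) atTop (nhds 0)) :
    Tendsto (fun n : ℕ => (n : ℝ≥0∞) ^ 4 * (4 * ENNReal.ofReal (p n)) ^ r) atTop (nhds 0) := by
  have hscaled := ENNReal.tendsto_ofReal (hp.const_mul ((4 : ℝ) ^ r))
  rw [mul_zero, ENNReal.ofReal_zero] at hscaled
  refine hscaled.congr fun n => ?_
  rw [mul_left_comm, ← mul_pow, ENNReal.ofReal_mul (by positivity),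
    ENNReal.ofReal_pow (by positivity), ENNReal.ofReal_pow (mul_nonneg zero_le_four (hp0 n)),
    ENNReal.ofReal_mul zero_le_four, ENNReal.ofReal_natCast, ENNReal.ofReal_ofNat]

lemma tendsto_zero_of_sq_le {ι : Type*} {l : Filter ι} {u v : ι → ℝ≥0∞}
    (hv : Tendsto v l (nhds 0)) (huv : ∀ᶠ i in l, u i ^ 2 ≤ v i) : Tendsto u l (nhds 0) := by
  refine ENNReal.tendsto_nhds_zero.2 fun ε hε => ?_
  filter_upwards [huv, ENNReal.tendsto_nhds_zero.1 hv (ε ^ 2)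
    (ENNReal.pow_pos hε 2)] with i hui hvi
  exact (ENNReal.pow_le_pow_left_iff two_ne_zero).1 (hui.trans hvi)

theorem statement10_general {k : ℕ → ℕ} {r : ℕ} (hp0 : ∀ n, 0 ≤ p n)
    (hp : Tendsto (fun n : ℕ => (n : ℝ) ^ 4 * p n ^ r) atTop (nhds 0))
    (hk : ∀ᶠ n in atTop, r ≤ k n) :
    Tendsto (fun n => gnp n (p n) {f | HasDensePair f (k n)}) atTop (nhds 0) := by
  refine tendsto_zero_of_sq_le (tendsto_ofReal_pow_four_mul_pow hp0 hp) ?_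
  filter_upwards [hk, eventually_ge_atTop 1, hp.eventually_lt_const zero_lt_one,
    (tendsto_ofReal_pow_four_mul_pow hp0 hp).eventually_lt_const zero_lt_one]
    with n hkn hn hsmall hsmall'
  have hp1 : p n ≤ 1 := by
    refine le_of_not_gt fun h => hsmall.not_ge ?_
    exact one_le_mul_of_one_le_of_one_le (one_le_pow₀ (by exact_mod_cast hn)) (one_le_pow₀ h.le)
  calc gnp n (p n) {f | HasDensePair f (k n)} ^ 2
      ≤ ((n : ℝ≥0∞) ^ (2 * k n) * (4 * ENNReal.ofReal (p n)) ^ ((k n ^ 2 + 1) / 2)) ^ 2 :=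
        pow_le_pow_left' (gnp_setOf_hasDensePair_le hp1 (k n)) 2
    _ ≤ (n : ℝ≥0∞) ^ 4 * (4 * ENNReal.ofReal (p n)) ^ r :=
        sq_pow_mul_pow_le (by exact_mod_cast hn) zero_le hsmall' hkn (by omega)

lemma tendsto_gnp_setOf_not_of_imp (hp1 : ∀ n, p n ≤ 1)
    {P Q : (n : ℕ) → ((completeGraph (Fin n)).edgeSet → Bool) → Prop}
    (hPQ : ∀ n f, P n f → Q n f)
    (hQ : Tendsto (fun n => gnp n (p n) {f | Q n f}) atTop (nhds 0)) :
    Tendsto (fun n => gnp n (p n) {f | ¬ P n f}) atTop (nhds 1) := by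
  have hP : Tendsto (fun n => gnp n (p n) {f | P n f}) atTop (nhds 0) :=
    tendsto_of_tendsto_of_tendsto_of_le_of_le tendsto_const_nhds hQ (fun _ => zero_le)
      fun n => measure_mono (hPQ n)
  have hcompl := ENNReal.Tendsto.sub (tendsto_const_nhds (x := 1)) hP (.inl ENNReal.one_ne_top)
  rw [tsub_zero] at hcompl
  refine hcompl.congr fun n => ?_
  have := isProbabilityMeasure_gnp (n := n) (hp1 n)
  exact (prob_compl_eq_one_sub (Set.toFinite _).measurableSet).symm

end Asymptotics

lemma log_natCast_div_nonneg (n : ℕ) : 0 ≤ Real.log n / n :=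
  div_nonneg (Real.log_natCast_nonneg n) n.cast_nonneg

lemma log_natCast_div_le_one (n : ℕ) : Real.log n / n ≤ 1 :=
  div_le_one_of_le₀ (Real.log_le_self n.cast_nonneg) n.cast_nonneg

lemma tendsto_pow_four_mul_log_div_pow_five :
    Tendsto (fun n : ℕ => (n : ℝ) ^ 4 * (Real.log n / n) ^ 5) atTop (nhds 0) := by
  have hlog : Tendsto (fun n : ℕ => Real.log n ^ 5 / n) atTop (nhds 0) :=
    (Real.isLittleO_pow_log_id_atTop (n := 5)).tendsto_div_nhds_zero.comp
      tendsto_natCast_atTop_atTop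
  refine hlog.congr' ?_
  filter_upwards [eventually_ne_atTop 0] with n hn
  field_simp

lemma hasDensePair_of_le_edgesBetween {n w : ℕ} {f : (completeGraph (Fin n)).edgeSet → Bool}
    {A B : Finset (Fin n)} (hA : A.card = w ^ 2) (hB : B.card = w ^ 2)
    (h : (w : ℝ) ^ 4 / 2 ≤ edgesBetween f A B) : HasDensePair f (w ^ 2) := by
  refine ⟨A, B, hA, hB, ?_⟩
  rify
  linarith

/-- for `p = log n / n`, a.a.s. there do not exist two disjoint vertex sets
`A`, `B` with `|A| = |B| = ω²` such that at least `ω⁴/2` edges of `G(n,p)` join `A`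
to `B`. -/
theorem statement10 (ω : ℕ → ℕ) (hω : Tendsto ω atTop atTop)
    (hω' : Tendsto (fun n : ℕ => Real.log (ω n) / Real.log (Real.log n)) atTop (nhds 0)) :
    Tendsto (fun n : ℕ =>
        gnp n (Real.log n / n)
          {f | ¬ ∃ A B : Finset (Fin n), Disjoint A B ∧
              A.card = ω n ^ 2 ∧ B.card = ω n ^ 2 ∧
              ((ω n : ℝ) ^ 4) / 2 ≤ (edgesBetween f A B : ℝ)})
      atTop (nhds 1) := by
  have hω5 : ∀ᶠ n in atTop, 5 ≤ ω n ^ 2 :=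
    (hω.eventually_ge_atTop 3).mono fun n hn => by nlinarith
  exact tendsto_gnp_setOf_not_of_imp log_natCast_div_le_one
    (fun _ _ ⟨_, _, _, hA, hB, h⟩ => hasDensePair_of_le_edgesBetween hA hB h)
    (statement10_general log_natCast_div_nonneg tendsto_pow_four_mul_log_div_pow_five hω5)

end
end

section
/- Let C be a cycle graph whose vertex set is partitioned into three nonempty sets V₁, V₂, V₃, each of which induces a path in C (i.e., V₁, V₂, V₃ are three consecutive arcs of the cycle). Let Ĉ be a graph obtained from C by adding a (possibly empty) set S of new vertices, disjoint from V(C), such that S is an independent set in Ĉ and every vertex of S is adjacent in Ĉ to exactly three vertices of C, one in each of V₁, V₂ and V₃. Then: (a) Ĉ is 2-connected; and (b) every cutset {v₁, v₂} of Ĉ of size 2 satisfies {v₁, v₂} ⊆ V(C), and Ĉ ∖ {v₁, v₂} has exactly two connected components, one of which has its vertex set contained in V(C), induces a path in C, and consists entirely of vertices of degree 2 in Ĉ. -/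
open Finset SimpleGraph
open scoped Classical

noncomputable section

/-- `G` is a path graph: some Hamiltonian path uses every edge of `G`. -/
def IsPathGraph {V : Type*} (G : SimpleGraph V) : Prop :=
  ∃ (u v : V) (w : G.Walk u v), w.IsHamiltonian ∧ ∀ e ∈ G.edgeSet, e ∈ w.edges

/-- `G` is a cycle graph: some Hamiltonian cycle uses every edge of `G`. -/
def IsCycleGraph {V : Type*} (G : SimpleGraph V) : Prop :=
  ∃ (u : V) (w : G.Walk u u), w.IsHamiltonianCycle ∧ ∀ e ∈ G.edgeSet, e ∈ w.edges

/-- A cutset of `G` is a set of vertices whose removal disconnects the graph. -/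
def IsCutset {V : Type*} [Fintype V] [DecidableEq V] (G : SimpleGraph V) (U : Finset V) :
    Prop :=
  ¬ (G.induce ((↑U : Set V)ᶜ)).Connected

/-!
Deleting two vertices `u`, `v` of the cycle leaves two arcs, each a path or empty, with no edge
between them. Since `{u, v}` meets at most two of the three disjoint classes, some class avoids it;
that class is connected, so it lies inside one arc `B`. Every vertex outside the cycle has a
neighbour in that class, so `B` together with all outside vertices is connected. If `{u, v}` is a
cutset, the other arc is therefore nonempty and has no edge to the rest: it is the path component,
and its vertices have only their two cycle neighbours.

Deleting any set that contains at most one cycle vertex leaves a connected part of the cycle to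
which every remaining outside vertex is still attached. This gives 2-connectedness, and it shows
that a two-element cutset must lie in the cycle.
-/

/-- `A` and `B` partition `t` and no edge of `G` joins them. This expresses how deleting vertices
splits a cycle into arcs, or a graph into components; either part may be empty. -/
structure IsSeparation {V : Type*} (G : SimpleGraph V) (t A B : Set V) : Prop where
  union_eq : A ∪ B = t
  disjoint : Disjoint A B
  not_adj : ∀ a ∈ A, ∀ b ∈ B, ¬ G.Adj a b

/-- `f` restricted to the index set `I` lists distinct vertices of `G` that are adjacent exactly
when their indices are consecutive. For `I` a nonempty interval, `f '' I` induces a path. -/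
structure IsPathEnum {V : Type*} (G : SimpleGraph V) (f : ℕ → V) (I : Set ℕ) : Prop where
  injOn : Set.InjOn f I
  adj_iff : ∀ i ∈ I, ∀ j ∈ I, G.Adj (f i) (f j) ↔ i + 1 = j ∨ j + 1 = i

theorem exists_disjoint_of_card_lt {ι α : Type*} [Fintype ι] {W : ι → Finset α}
    (hW : Pairwise (Function.onFun Disjoint W)) {U : Finset α} (hU : #U < Fintype.card ι) :
    ∃ i, Disjoint (W i) U := by
  by_contra! hmeet
  refine hU.not_ge (card_le_card_of_forall_subsingleton (s := univ) (fun i x => x ∈ W i)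
    (fun i _ => ?_) fun x _ i hi j hj => ?_)
  · obtain ⟨x, hxW, hxU⟩ := not_disjoint_iff.1 (hmeet i)
    exact ⟨x, hxU, hxW⟩
  · by_contra hij
    exact disjoint_left.1 (hW hij) hi.2 hj.2

section

variable {V : Type*} {G : SimpleGraph V} {s t A B W : Set V} {u v : V}

theorem connected_of_forall_mem_support (p : G.Walk u v) (hp : ∀ x, x ∈ p.support) :
    G.Connected :=
  connected_iff_exists_forall_reachable G |>.2 ⟨u, fun x => ⟨p.takeUntil x (hp x)⟩⟩

theorem induce_connected_of_forall_exists_adj (hs : (G.induce s).Connected) (hst : s ⊆ t)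
    (hadj : ∀ x ∈ t, x ∉ s → ∃ y ∈ s, G.Adj x y) : (G.induce t).Connected := by
  obtain ⟨⟨u, hu⟩⟩ := hs.nonempty
  refine induce_connected_of_patches u (hst hu) fun {x} hx => ?_
  by_cases hxs : x ∈ s
  · exact ⟨s, hst, hu, hxs, hs.preconnected _ _⟩
  · obtain ⟨y, hy, hxy⟩ := hadj x hx hxs
    have hsx : (G.induce (s ∪ {x})).Connected :=
      connected_induce_union hs.preconnected Preconnected.of_subsingleton hy rfl hxy.symm
    exact ⟨s ∪ {x}, Set.union_subset hst (Set.singleton_subset_iff.2 hx), Or.inl hu, Or.inr rfl,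
      hsx.preconnected _ _⟩

namespace IsSeparation

theorem symm (h : IsSeparation G t A B) : IsSeparation G t B A where
  union_eq := Set.union_comm B A ▸ h.union_eq
  disjoint := h.disjoint.symm
  not_adj b hb a ha hba := h.not_adj a ha b hb hba.symm

theorem subset_or_subset (h : IsSeparation G t A B) (hW : (G.induce W).Preconnected)
    (hWt : W ⊆ t) : W ⊆ A ∨ W ⊆ B := by
  have hWAB : W ⊆ A ∪ B := h.union_eq ▸ hWt
  by_contra! hcon
  obtain ⟨a, haW, haB⟩ := Set.not_subset.1 hcon.2
  obtain ⟨b, hbW, hbA⟩ := Set.not_subset.1 hcon.1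
  have haA : a ∈ A := (hWAB haW).resolve_right haB
  obtain ⟨p⟩ := hW ⟨a, haW⟩ ⟨b, hbW⟩
  obtain ⟨d, -, hdA, hdnA⟩ := p.exists_boundary_dart (Subtype.val ⁻¹' A) haA hbA
  exact h.not_adj _ hdA _ ((hWAB d.snd.2).resolve_left hdnA) d.adj

theorem of_not_connected (hAB : A ∪ B = t) (hdisj : Disjoint A B)
    (hA : (G.induce A).Preconnected) (hB : (G.induce B).Preconnected)
    (ht : ¬ (G.induce t).Connected) : IsSeparation G t A B where
  union_eq := hAB
  disjoint := hdisj
  not_adj _ ha _ hb hab := ht (hAB ▸ connected_induce_union hA hB ha hb hab)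

end IsSeparation

theorem IsPathGraph.connected (h : IsPathGraph G) : G.Connected := by
  obtain ⟨_, _, p, hp, -⟩ := h
  exact connected_of_forall_mem_support p hp.mem_support

theorem isPathGraph_of_isPath {p : G.Walk u v} (hp : p.IsPath) (hmem : ∀ x, x ∈ p.support)
    (hedge : ∀ x y, G.Adj x y → s(x, y) ∈ p.edges) : IsPathGraph G :=
  ⟨u, v, p, hp.isHamiltonian_of_mem hmem, Sym2.ind hedge⟩

theorem isPathGraph_induce_support {p : G.Walk u v} (hp : p.IsPath)
    (hedge : ∀ x ∈ p.support, ∀ y ∈ p.support, G.Adj x y → s(x, y) ∈ p.edges) :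
    IsPathGraph (G.induce {x | x ∈ p.support}) := by
  let q := p.induce {x | x ∈ p.support} fun _ hx => hx
  have hqp : q.map (Embedding.induce _).toHom = p := p.map_induce _
  have hq : q.IsPath := Walk.IsPath.of_map (hqp ▸ hp)
  have hsupport : q.support.map Subtype.val = p.support :=
    (q.support_map _).symm.trans (congrArg Walk.support hqp)
  have hedges : q.edges.map (Sym2.map Subtype.val) = p.edges :=
    (q.edges_map _).symm.trans (congrArg Walk.edges hqp)
  refine isPathGraph_of_isPath hq (fun x => ?_) fun x y hxy => ?_
  · have hx : (x : V) ∈ q.support.map Subtype.val := by rw [hsupport]; exact x.2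
    exact (List.mem_map_of_injective Subtype.val_injective).1 hx
  · exact (List.mem_map_of_injective (Sym2.map.injective Subtype.val_injective)).1
      (hedges.symm ▸ hedge x x.2 y y.2 hxy)

theorem exists_walk_getVert_eq {g : ℕ → V} {m : ℕ} (hadj : ∀ i < m, G.Adj (g i) (g (i + 1))) :
    ∃ p : G.Walk (g 0) (g m), p.length = m ∧ ∀ i ≤ m, p.getVert i = g i := by
  induction m generalizing g with
  | zero => exact ⟨.nil, rfl, fun i hi => by rw [Nat.le_zero.1 hi, Walk.getVert_zero]⟩
  | succ m ih =>
    obtain ⟨p, hlen, hget⟩ := ih (g := fun i => g (i + 1)) fun i hi => hadj (i + 1) (by omega)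
    refine ⟨.cons (hadj 0 m.succ_pos) p, by rw [Walk.length_cons, hlen], fun i hi => ?_⟩
    cases i with
    | zero => exact Walk.getVert_zero _
    | succ i => exact (p.getVert_cons_succ _).trans (hget i (by omega))

theorem mk_getVert_mem_edges_iff_of_isCycle {p : G.Walk u u} (hp : p.IsCycle) {i j : ℕ}
    (hi : i ∈ Set.Ico 1 p.length) (hj : j ∈ Set.Ico 1 p.length) :
    s(p.getVert i, p.getVert j) ∈ p.edges ↔ i + 1 = j ∨ j + 1 = i := by
  have hinj {k l : ℕ} (hk : k < p.length) (hl : l ∈ Set.Ico 1 p.length)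
      (h : p.getVert k = p.getVert l) : k = l :=
    hp.getVert_injOn' (Nat.le_sub_one_of_lt hk) (Nat.le_sub_one_of_lt hl.2) h
  have hinj_succ {k l : ℕ} (hk : k < p.length) (hl : l ∈ Set.Ico 1 p.length)
      (h : p.getVert (k + 1) = p.getVert l) : k + 1 = l :=
    hp.getVert_injOn ⟨k.succ_pos, hk⟩ ⟨hl.1, hl.2.le⟩ h
  rw [Walk.mk_mem_edges_iff_exists]
  constructor
  · rintro ⟨k, hk, hkij⟩
    rcases Sym2.eq_iff.1 hkij with ⟨hki, hkj⟩ | ⟨hkj, hki⟩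
    · exact Or.inl (hinj hk hi hki ▸ hinj_succ hk hj hkj)
    · exact Or.inr (hinj hk hj hkj ▸ hinj_succ hk hi hki)
  · rintro (rfl | rfl)
    · exact ⟨i, hi.2, rfl⟩
    · exact ⟨j, hj.2, Sym2.eq_swap⟩

namespace IsPathEnum

variable {f : ℕ → V} {I J : Set ℕ} {a b k : ℕ}

theorem mono (h : IsPathEnum G f I) (hJ : J ⊆ I) : IsPathEnum G f J where
  injOn := h.injOn.mono hJ
  adj_iff i hi j hj := h.adj_iff i (hJ hi) j (hJ hj)

theorem isPathGraph_induce_image_Ico (h : IsPathEnum G f (Set.Ico a b)) (hab : a < b) :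
    IsPathGraph (G.induce (f '' Set.Ico a b)) := by
  obtain ⟨m, rfl⟩ := Nat.exists_eq_add_of_lt hab
  obtain ⟨p, hlen, hget⟩ := exists_walk_getVert_eq (G := G) (g := fun i => f (a + i)) (m := m)
    fun i hi => (h.adj_iff _ (by grind) _ (by grind)).2 (Or.inl rfl)
  have hp : p.IsPath := by
    refine Walk.IsPath.getVert_injOn_iff p |>.1 fun i hi j hj hij => ?_
    rw [hget i (hlen ▸ hi), hget j (hlen ▸ hj)] at hij
    exact Nat.add_left_cancel (h.injOn (by grind) (by grind) hij)
  have hsupport : {x | x ∈ p.support} = f '' Set.Ico a (a + m + 1) := by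
    ext x
    refine Walk.mem_support_iff_exists_getVert.trans ⟨?_, ?_⟩
    · rintro ⟨i, rfl, hi⟩
      exact ⟨a + i, by grind, (hget i (hlen ▸ hi)).symm⟩
    · rintro ⟨i, hi, rfl⟩
      exact ⟨i - a, by rw [hget _ (by grind), Nat.add_sub_cancel' hi.1], by grind⟩
  have hedge (i : ℕ) (hi : i ∈ Set.Ico a (a + m)) : s(f i, f (i + 1)) ∈ p.edges := by
    obtain ⟨i, rfl⟩ := Nat.exists_eq_add_of_le hi.1
    have him : i < m := Nat.add_lt_add_iff_left.1 hi.2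
    exact p.mk_mem_edges_iff_exists.2 ⟨i, by omega, by rw [hget i him.le, hget (i + 1) him]; rfl⟩
  rw [← hsupport]
  refine isPathGraph_induce_support hp fun x hx y hy hxy => ?_
  obtain ⟨i, hi, rfl⟩ := hsupport.le hx
  obtain ⟨j, hj, rfl⟩ := hsupport.le hy
  rcases (h.adj_iff i hi j hj).1 hxy with rfl | rfl
  · exact hedge i (by grind)
  · exact Sym2.eq_swap ▸ hedge j (by grind)

theorem isSeparation_image_Ico (h : IsPathEnum G f (Set.Ico a b)) (hk : k ∈ Set.Ico a b) :
    IsSeparation G (f '' Set.Ico a b \ {f k}) (f '' Set.Ico a k) (f '' Set.Ico (k + 1) b) where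
  union_eq := by
    have hIco : Set.Ico a k ∪ Set.Ico (k + 1) b = Set.Ico a b \ {k} := by
      ext i
      grind
    rw [← Set.image_union, hIco, h.injOn.image_sdiff_subset (Set.singleton_subset_iff.2 hk),
      Set.image_singleton]
  disjoint := by
    refine Set.disjoint_image_image fun i hi j hj hij => ?_
    have := h.injOn (by grind) (by grind) hij
    grind
  not_adj := by
    rintro _ ⟨i, hi, rfl⟩ _ ⟨j, hj, rfl⟩ hij
    have := (h.adj_iff i (by grind) j (by grind)).1 hij
    grind

end IsPathEnum

namespace IsCycleGraph

theorem exists_isCycle (h : IsCycleGraph G) (v : V) :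
    ∃ p : G.Walk v v, p.IsCycle ∧ (∀ x, x ∈ p.support) ∧
      ∀ x y, G.Adj x y ↔ s(x, y) ∈ p.edges := by
  obtain ⟨u, c, hc, hedge⟩ := h
  have hv := hc.mem_support v
  exact ⟨c.rotate v hv, (hc.rotate hv).isCycle, (hc.rotate hv).mem_support, fun x y =>
    ⟨fun hxy => (c.rotate_edges v hv).mem_iff.2 (hedge _ hxy), Walk.adj_of_mem_edges _⟩⟩

theorem connected (h : IsCycleGraph G) : G.Connected := by
  obtain ⟨_, p, hp, -⟩ := h
  exact connected_of_forall_mem_support p hp.mem_support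

theorem three_le_card [Fintype V] (h : IsCycleGraph G) : 3 ≤ Fintype.card V := by
  obtain ⟨_, p, hp, -⟩ := h
  exact hp.length_eq ▸ hp.isCycle.three_le_length

theorem ncard_neighborSet (h : IsCycleGraph G) (v : V) : (G.neighborSet v).ncard = 2 := by
  obtain ⟨p, hp, hmem, hadj⟩ := h.exists_isCycle v
  have : G.neighborSet v = p.toSubgraph.neighborSet v := by
    ext w
    rw [mem_neighborSet, hadj, Subgraph.mem_neighborSet, ← Subgraph.mem_edgeSet,
      Walk.mem_edges_toSubgraph]
  rw [this, hp.ncard_neighborSet_toSubgraph_eq_two (hmem v)]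

theorem card_filter_adj_eq_two [Fintype V] (h : IsCycleGraph (G.induce s)) (hv : v ∈ s)
    (hN : G.neighborSet v ⊆ s) : #{w | G.Adj v w} = 2 := by
  rw [← neighborFinset_eq_filter, card_neighborFinset_eq_degree,
    ← degree_induce_of_neighborSet_subset (v := ⟨v, hv⟩) hN, ← card_neighborFinset_eq_degree,
    ← Set.ncard_coe_finset, coe_neighborFinset, h.ncard_neighborSet]

theorem exists_isPathEnum (h : IsCycleGraph (G.induce s)) (hu : u ∈ s) :
    ∃ (n : ℕ) (f : ℕ → V),
      1 < n ∧ IsPathEnum G f (Set.Ico 1 n) ∧ f '' Set.Ico 1 n = s \ {u} := by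
  obtain ⟨p, hp, hmem, hadj⟩ := h.exists_isCycle ⟨u, hu⟩
  have hinj : Set.InjOn (fun i => (p.getVert i : V)) {i | 1 ≤ i ∧ i ≤ p.length} :=
    Subtype.val_injective.comp_injOn hp.getVert_injOn
  have hend : (p.getVert p.length : V) = u := by rw [p.getVert_length]
  have hadj_iff : ∀ i ∈ Set.Ico 1 p.length, ∀ j ∈ Set.Ico 1 p.length,
      (G.Adj (p.getVert i) (p.getVert j) ↔ i + 1 = j ∨ j + 1 = i) :=
    fun i hi j hj => (hadj _ _).trans (mk_getVert_mem_edges_iff_of_isCycle hp hi hj)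
  have himage : (fun i => (p.getVert i : V)) '' Set.Ico 1 p.length = s \ {u} := by
    ext x
    constructor
    · rintro ⟨i, hi, rfl⟩
      refine ⟨(p.getVert i).2, fun hiu => ?_⟩
      exact hi.2.ne (hinj ⟨hi.1, hi.2.le⟩ ⟨hi.1.trans hi.2.le, le_rfl⟩ (hiu.trans hend.symm))
    · rintro ⟨hxs, hxu⟩
      obtain ⟨i, hi, hip⟩ := Walk.mem_support_iff_exists_getVert.1 (hmem ⟨x, hxs⟩)
      obtain rfl : (p.getVert i : V) = x := congrArg Subtype.val hi
      refine ⟨i, ⟨Nat.one_le_iff_ne_zero.2 ?_, hip.lt_of_ne ?_⟩, rfl⟩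
      · rintro rfl
        exact hxu (congrArg Subtype.val p.getVert_zero)
      · rintro rfl
        exact hxu hend
  have hlen := hp.three_le_length
  exact ⟨p.length, fun i => p.getVert i, by omega, ⟨hinj.mono (by grind), hadj_iff⟩, himage⟩

theorem isPathGraph_induce_sdiff_singleton (h : IsCycleGraph (G.induce s)) (hu : u ∈ s) :
    IsPathGraph (G.induce (s \ {u})) := by
  obtain ⟨n, f, hn, hf, himage⟩ := h.exists_isPathEnum hu
  exact himage ▸ hf.isPathGraph_induce_image_Ico hn

theorem exists_isSeparation_sdiff_pair (h : IsCycleGraph (G.induce s)) (hu : u ∈ s) (hv : v ∈ s)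
    (huv : u ≠ v) :
    ∃ A B, IsSeparation G (s \ {u, v}) A B ∧
      (A.Nonempty → IsPathGraph (G.induce A)) ∧ (B.Nonempty → IsPathGraph (G.induce B)) := by
  obtain ⟨n, f, -, hf, himage⟩ := h.exists_isPathEnum hu
  obtain ⟨k, hk, rfl⟩ : v ∈ f '' Set.Ico 1 n := himage ▸ ⟨hv, huv.symm⟩
  refine ⟨f '' Set.Ico 1 k, f '' Set.Ico (k + 1) n, ?_, fun hA => ?_, fun hB => ?_⟩
  · have hsep := hf.isSeparation_image_Ico hk
    rwa [himage, Set.sdiff_sdiff, Set.singleton_union] at hsep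
  · exact (hf.mono (Set.Ico_subset_Ico_right hk.2.le)).isPathGraph_induce_image_Ico
      (Set.nonempty_Ico.1 hA.of_image)
  · exact (hf.mono (Set.Ico_subset_Ico_left (hk.1.trans k.le_succ))).isPathGraph_induce_image_Ico
      (Set.nonempty_Ico.1 hB.of_image)

theorem induce_compl_connected_of_subsingleton (h : IsCycleGraph (G.induce s))
    (hadj : ∀ x ∉ s, ∀ a, ∃ y ∈ s \ {a}, G.Adj x y) {U : Set V} (hU : (U ∩ s).Subsingleton) :
    (G.induce Uᶜ).Connected := by
  obtain ⟨a, hcore, hsU⟩ :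
      ∃ a, (G.induce (s \ U)).Connected ∧ s \ {a} ⊆ s \ U := by
    rcases hU.eq_empty_or_singleton with hUs | ⟨a, ha⟩
    · obtain ⟨a⟩ := h.connected.nonempty
      rw [Disjoint.sdiff_eq_left (Set.disjoint_iff_inter_eq_empty.2 (Set.inter_comm U s ▸ hUs))]
      exact ⟨a, h.connected, Set.sdiff_subset⟩
    · have ha' : a ∈ U ∩ s := ha ▸ rfl
      rw [← Set.sdiff_inter_self_eq_sdiff, ha]
      exact ⟨a, (h.isPathGraph_induce_sdiff_singleton ha'.2).connected, subset_rfl⟩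
  refine induce_connected_of_forall_exists_adj hcore (fun _ hx => hx.2) fun x hxU hx => ?_
  obtain ⟨y, hy, hxy⟩ := hadj x (fun hxs => hx ⟨hxs, hxU⟩) a
  exact ⟨y, hsU hy, hxy⟩

theorem isKConnected_two [Fintype V] (h : IsCycleGraph (G.induce s))
    (hadj : ∀ x ∉ s, ∀ a, ∃ y ∈ s \ {a}, G.Adj x y) : IsKConnected 2 G := by
  refine ⟨h.three_le_card.trans (Fintype.card_subtype_le _), fun U hU => ?_⟩
  have hUsub : (U : Set V).Subsingleton := fun _ hx _ hy => card_le_one.1 hU _ hx _ hy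
  exact h.induce_compl_connected_of_subsingleton hadj (hUsub.anti Set.inter_subset_left)

theorem mem_of_not_connected (h : IsCycleGraph (G.induce s))
    (hadj : ∀ x ∉ s, ∀ a, ∃ y ∈ s \ {a}, G.Adj x y) (hcut : ¬ (G.induce {u, v}ᶜ).Connected) :
    u ∈ s := by
  by_contra hu
  refine hcut (h.induce_compl_connected_of_subsingleton hadj ?_)
  rw [Set.insert_inter_of_notMem hu]
  exact Set.subsingleton_singleton.anti Set.inter_subset_left

theorem card_filter_adj_eq_two_of_isSeparation [Fintype V] (h : IsCycleGraph (G.induce s))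
    (hAB : IsSeparation G t A B) (hs : sᶜ ⊆ B) (hv : v ∈ A) : #{w | G.Adj v w} = 2 := by
  have hAs : A ⊆ s := hAB.disjoint.subset_compl_right.trans (Set.compl_subset_comm.1 hs)
  exact h.card_filter_adj_eq_two (hAs hv) fun w hw =>
    by_contra fun hws => hAB.not_adj v hv w (hs hws) hw

theorem exists_isSeparation_compl_pair (h : IsCycleGraph (G.induce s)) (hu : u ∈ s) (hv : v ∈ s)
    (huv : u ≠ v) (hW : (G.induce W).Connected) (hWs : W ⊆ s \ {u, v})
    (hadj : ∀ x ∉ s, ∃ y ∈ W, G.Adj x y) (hcut : ¬ (G.induce {u, v}ᶜ).Connected) :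
    ∃ P Q, IsSeparation G {u, v}ᶜ P Q ∧ IsPathGraph (G.induce P) ∧ (G.induce Q).Connected ∧
      sᶜ ⊆ Q := by
  obtain ⟨A, B, hAB, hWB, hA, hB⟩ : ∃ A B, IsSeparation G (s \ {u, v}) A B ∧ W ⊆ B ∧
      (A.Nonempty → IsPathGraph (G.induce A)) ∧ (B.Nonempty → IsPathGraph (G.induce B)) := by
    obtain ⟨A, B, hAB, hA, hB⟩ := h.exists_isSeparation_sdiff_pair hu hv huv
    rcases hAB.subset_or_subset hW.preconnected hWs with hWA | hWB
    · exact ⟨B, A, hAB.symm, hWA, hB, hA⟩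
    · exact ⟨A, B, hAB, hWB, hA, hB⟩
  have hBconn : (G.induce B).Connected :=
    (hB ((Set.nonempty_coe_sort.1 hW.nonempty).mono hWB)).connected
  have hQ : (G.induce (B ∪ sᶜ)).Connected := by
    refine induce_connected_of_forall_exists_adj hBconn Set.subset_union_left fun x hx hxB => ?_
    obtain ⟨y, hy, hxy⟩ := hadj x (hx.resolve_left hxB)
    exact ⟨y, hWB hy, hxy⟩
  have hunion : A ∪ (B ∪ sᶜ) = {u, v}ᶜ := by
    rw [← Set.union_assoc, hAB.union_eq]
    ext x
    grind
  have hAne : A.Nonempty := by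
    by_contra! hempty
    exact hcut (by rwa [← hunion, hempty, Set.empty_union])
  have hdisj : Disjoint A (B ∪ sᶜ) := by
    have hAs : A ⊆ s := fun x hx => (hAB.union_eq ▸ Or.inl hx : x ∈ s \ {u, v}).1
    exact Set.disjoint_union_right.2 ⟨hAB.disjoint, Set.disjoint_compl_right_iff_subset.2 hAs⟩
  exact ⟨A, B ∪ sᶜ, .of_not_connected hunion hdisj (hA hAne).connected.preconnected
    hQ.preconnected hcut, hA hAne, hQ, Set.subset_union_right⟩

end IsCycleGraph

end

theorem statement12_general {V ι : Type*} [Fintype V] [DecidableEq V] [Fintype ι]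
    (G : SimpleGraph V) (S : Finset V) (W : ι → Finset V) (hι : 3 ≤ Fintype.card ι)
    (hWS : ∀ i, W i ⊆ Sᶜ) (hdisj : Pairwise (Function.onFun Disjoint W))
    (hcycle : IsCycleGraph (G.induce ((↑(Sᶜ) : Set V))))
    (hconn : ∀ i, (G.induce (W i : Set V)).Connected)
    (hadj : ∀ x ∈ S, ∀ i, ∃ y ∈ W i, G.Adj x y) :
    IsKConnected 2 G ∧
      ∀ v₁ v₂ : V, v₁ ≠ v₂ → IsCutset G {v₁, v₂} →
        (v₁ ∉ S ∧ v₂ ∉ S) ∧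
        ∃ P Q : Finset V,
          P ∪ Q = ({v₁, v₂} : Finset V)ᶜ ∧ Disjoint P Q ∧
          P.Nonempty ∧ Q.Nonempty ∧
          (∀ a ∈ P, ∀ b ∈ Q, ¬ G.Adj a b) ∧
          (G.induce (↑P : Set V)).Connected ∧
          (G.induce (↑Q : Set V)).Connected ∧
          P ⊆ Sᶜ ∧ IsPathGraph (G.induce (↑P : Set V)) ∧
          ∀ u ∈ P, (Finset.univ.filter (fun w => G.Adj u w)).card = 2 := by
  have hmem {x : V} (hx : x ∉ (↑(Sᶜ) : Set V)) : x ∈ S := by simpa using hx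
  have havoid (U : Finset V) (hU : #U ≤ 2) : ∃ i, (W i : Set V) ⊆ ↑(Sᶜ) \ ↑U := by
    obtain ⟨i, hi⟩ := exists_disjoint_of_card_lt hdisj (hU.trans_lt hι)
    exact ⟨i, Set.subset_sdiff.2 ⟨coe_subset.2 (hWS i), disjoint_coe.2 hi⟩⟩
  have hattach : ∀ x ∉ (↑(Sᶜ) : Set V), ∀ a, ∃ y ∈ (↑(Sᶜ) : Set V) \ {a}, G.Adj x y := by
    intro x hx a
    obtain ⟨i, hi⟩ := havoid {a} (by simp)
    obtain ⟨y, hy, hxy⟩ := hadj x (hmem hx) i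
    exact ⟨y, coe_singleton a ▸ hi hy, hxy⟩
  refine ⟨hcycle.isKConnected_two hattach, fun v₁ v₂ hne hcut => ?_⟩
  have hcut' : ¬ (G.induce {v₁, v₂}ᶜ).Connected := by
    rwa [IsCutset, coe_pair] at hcut
  have hv₁ := hcycle.mem_of_not_connected hattach hcut'
  have hv₂ := hcycle.mem_of_not_connected hattach (Set.pair_comm v₁ v₂ ▸ hcut')
  obtain ⟨i, hi⟩ := havoid {v₁, v₂} card_le_two
  obtain ⟨P, Q, hPQ, hP, hQ, hSQ⟩ := hcycle.exists_isSeparation_compl_pair hv₁ hv₂ hne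
    (hconn i) (by simpa using hi) (fun x hx => hadj x (hmem hx) i) hcut'
  lift P to Finset V using P.toFinite
  lift Q to Finset V using Q.toFinite
  have hPS : (P : Set V) ⊆ ↑(Sᶜ) :=
    hPQ.disjoint.subset_compl_right.trans (Set.compl_subset_comm.1 hSQ)
  have hdeg : ∀ a ∈ P, #{w | G.Adj a w} = 2 := fun a ha =>
    hcycle.card_filter_adj_eq_two_of_isSeparation hPQ hSQ ha
  refine ⟨⟨mem_compl.1 hv₁, mem_compl.1 hv₂⟩, P, Q, ?_, disjoint_coe.1 hPQ.disjoint, ?_, ?_,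
    hPQ.not_adj, hP.connected, hQ, coe_subset.1 hPS, hP, hdeg⟩
  · exact coe_injective (by push_cast; exact hPQ.union_eq)
  · exact nonempty_coe_sort.1 hP.connected.nonempty
  · exact nonempty_coe_sort.1 hQ.nonempty

/-- Let `C` be a cycle graph whose vertex set is partitioned into three
nonempty consecutive arcs `V₁, V₂, V₃` (each inducing a path).  Let `Ĉ` (here `Chat`) be
obtained from `C` by adding an independent set `S` of new vertices, each adjacent to
exactly three vertices of `C`, one in each of `V₁`, `V₂`, `V₃`.  Then (a) `Ĉ` is
`2`-connected, and (b) every cutset `{v₁, v₂}` of size `2` lies in `V(C)` and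
`Ĉ ∖ {v₁, v₂}` has exactly two connected components, one of which is contained in
`V(C)`, induces a path in `C`, and consists of vertices of degree `2` in `Ĉ`.
(`C` is the induced subgraph of `Chat` on `Sᶜ`.) -/
theorem statement12 {V : Type*} [Fintype V] [DecidableEq V]
    (Chat : SimpleGraph V) (S V₁ V₂ V₃ : Finset V)
    (hpart : V₁ ∪ V₂ ∪ V₃ = Sᶜ)
    (h12 : Disjoint V₁ V₂) (h13 : Disjoint V₁ V₃) (h23 : Disjoint V₂ V₃)
    (hne1 : V₁.Nonempty) (hne2 : V₂.Nonempty) (hne3 : V₃.Nonempty)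
    (hcycle : IsCycleGraph (Chat.induce ((↑(Sᶜ) : Set V))))
    (hpath1 : IsPathGraph (Chat.induce (↑V₁ : Set V)))
    (hpath2 : IsPathGraph (Chat.induce (↑V₂ : Set V)))
    (hpath3 : IsPathGraph (Chat.induce (↑V₃ : Set V)))
    (hind : ∀ u ∈ S, ∀ v ∈ S, ¬ Chat.Adj u v)
    (hadj : ∀ x ∈ S, (V₁.filter (fun u => Chat.Adj x u)).card = 1 ∧
        (V₂.filter (fun u => Chat.Adj x u)).card = 1 ∧
        (V₃.filter (fun u => Chat.Adj x u)).card = 1) :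
    IsKConnected 2 Chat ∧
      ∀ v₁ v₂ : V, v₁ ≠ v₂ → IsCutset Chat {v₁, v₂} →
        (v₁ ∉ S ∧ v₂ ∉ S) ∧
        ∃ P Q : Finset V,
          P ∪ Q = ({v₁, v₂} : Finset V)ᶜ ∧ Disjoint P Q ∧
          P.Nonempty ∧ Q.Nonempty ∧
          (∀ a ∈ P, ∀ b ∈ Q, ¬ Chat.Adj a b) ∧
          (Chat.induce (↑P : Set V)).Connected ∧
          (Chat.induce (↑Q : Set V)).Connected ∧
          P ⊆ Sᶜ ∧ IsPathGraph (Chat.induce (↑P : Set V)) ∧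
          ∀ u ∈ P, (Finset.univ.filter (fun w => Chat.Adj u w)).card = 2 := by
  have hnbr {x : V} {A : Finset V} (hA : (A.filter (fun u => Chat.Adj x u)).card = 1) :
      ∃ y ∈ A, Chat.Adj x y := filter_nonempty_iff.1 (card_pos.1 (hA ▸ one_pos))
  refine statement12_general Chat S ![V₁, V₂, V₃] le_rfl ?_ ?_ hcycle ?_ fun x hx => ?_
  · simpa [Fin.forall_fin_succ, union_subset_iff, and_assoc] using hpart.le
  · simp [Pairwise, Fin.forall_fin_succ, Function.onFun, h12, h13, h23, h12.symm, h13.symm,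
      h23.symm]
  · simpa [Fin.forall_fin_succ] using ⟨hpath1.connected, hpath2.connected, hpath3.connected⟩
  · obtain ⟨h₁, h₂, h₃⟩ := hadj x hx
    simpa [Fin.forall_fin_succ] using ⟨hnbr h₁, hnbr h₂, hnbr h₃⟩

end
end

section
/- Let N = ⌊ω^{-3}·n/2⌋ and t₁ = ⌊ω⁵·n⌋. Consider a uniformly random ordering of the edges of K_n and the following deterministic procedure: initialize N paths P₁, …, P_N, where P_j consists of the single vertex w_j, which is also its designated endpoint; at each of the rounds 1, …, t₁, if the proposed edge joins a vertex lying outside all current paths to the designated endpoint of some path P_j, the edge is accepted, the new vertex is appended to P_j and becomes its designated endpoint; otherwise the edge is ignored. Then asymptotically almost surely, after round t₁ the N paths together contain at least (1 − ω^{-1})·n vertices, and at least (1 − 2ω^{-1})·n of these vertices lie in paths containing between ω³ and 3ω³ vertices. -/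
open Filter SimpleGraph
open scoped Classical

noncomputable section

/-- The number of edges of the complete graph on `Fin n`. -/
def numEdges (n : ℕ) : ℕ := Fintype.card ((completeGraph (Fin n)).edgeSet)

/-- A uniformly random ordering of the edges of `K_n` is modelled as a uniformly random
bijection from the edge set of `K_n` to `Fin (numEdges n)`; the edge proposed at the
(0-indexed) round `r` is the preimage of `r`. -/
abbrev EdgeOrdering (n : ℕ) : Type := ((completeGraph (Fin n)).edgeSet) ≃ Fin (numEdges n)

/-- The list `(e_1, …, e_t)` of the first `t` proposed edges, in the order of proposal. -/
def history {n : ℕ} (σ : EdgeOrdering n) (t : ℕ) : List (Sym2 (Fin n)) :=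
  ((List.finRange (numEdges n)).filter (fun (r : Fin (numEdges n)) => decide ((r : ℕ) < t))).map
    (fun r => ((σ.symm r : ((completeGraph (Fin n)).edgeSet)) : Sym2 (Fin n)))

/-- The probability of an event under the uniform measure on a finite type. -/
def Pr {α : Type*} [Fintype α] (P : α → Prop) : ℝ :=
  ((Finset.univ.filter P).card : ℝ) / (Fintype.card α : ℝ)


/-- The initial configuration of the path-building procedure: `N` paths, the `j`-th
(for `j < N`) consisting of the single vertex `w_j`; indices `j ≥ N` carry the empty
list and never take part.  Each path is stored as a list whose head is its designated
endpoint. -/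
def initPaths (n N : ℕ) : Fin n → List (Fin n) :=
  fun j => if (j : ℕ) < N then [j] else []

/-- One round of the path-building procedure: if the proposed edge `e` joins a vertex `u`
lying outside all current paths to the designated endpoint (the head) of the `j`-th path,
then `u` is appended to that path and becomes its designated endpoint; otherwise nothing
happens. -/
def pathStep {n : ℕ} (f : Fin n → List (Fin n)) (e : Sym2 (Fin n)) : Fin n → List (Fin n) :=
  fun j =>
    if h : ∃ u : Fin n, (∀ k, u ∉ f k) ∧ ∃ w, (f j).head? = some w ∧ e = s(u, w) then
      h.choose :: f j
    else f j

/-- The configuration of paths after the procedure has processed the first `t` proposed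
edges of the ordering `σ`, starting from `N` single-vertex paths. -/
def pathsAfter {n : ℕ} (N : ℕ) (σ : EdgeOrdering n) (t : ℕ) : Fin n → List (Fin n) :=
  (history σ t).foldl pathStep (initPaths n N)

/-!
Given the first `t` proposed edges, the next one is uniform among the remaining ones. With `N` paths
covering `Y` vertices, exactly `N * (n - Y)` edges of `K_n` extend a path, and at most `t` of them
have already been proposed. So in each of the first `T` rounds `Y` grows in expectation by at least
`(N * (n - Y) - T) / M`, where `M` is the number of edges of `K_n`; as `Y` never exceeds `n`, this
bounds the expected number of uncovered vertices after `T` rounds by `T / N + M * n / (N * T)`.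

The lengths stay balanced because each uncovered vertex can be appended to every path: with `V` the
sum of the squared deviations of the lengths from their mean, appending a vertex to a path changes
`V - Y` by at most twice the deviation of that path, and over all extensions the deviations cancel.
So `V - Y` is a supermartingale up to the small contribution of the edges already proposed. Markov's
inequality for `n - Y` and for `V`, the latter in the manner of Chebyshev, gives the theorem.
-/

open Finset Asymptotics
open scoped BigOperators

section UniformProbability

variable {α : Type*} [Fintype α]

lemma pr_eq_expect (P : α → Prop) : Pr P = 𝔼 a, if P a then (1 : ℝ) else 0 := by
  rw [Fintype.expect_eq_sum_div_card, sum_boole, Pr]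

lemma pr_le_one (P : α → Prop) : Pr P ≤ 1 :=
  div_le_one_of_le₀ (mod_cast card_le_univ _) (Nat.cast_nonneg _)

lemma one_sub_expect_le_pr [Nonempty α] {P : α → Prop} {Z : α → ℝ} (hZ : ∀ a, 0 ≤ Z a)
    (hP : ∀ a, Z a < 1 → P a) : 1 - 𝔼 a, Z a ≤ Pr P := by
  calc 1 - 𝔼 a, Z a = 𝔼 a, (1 - Z a) := by rw [expect_sub_distrib, Fintype.expect_const]
    _ ≤ 𝔼 a, if P a then (1 : ℝ) else 0 := expect_le_expect fun a _ ↦ ?_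
    _ = Pr P := (pr_eq_expect P).symm
  split_ifs with ha
  · exact sub_le_self _ (hZ a)
  · exact sub_nonpos.2 (not_lt.1 fun h ↦ ha (hP a h))

end UniformProbability

section RandomOrdering

variable {n : ℕ}

lemma numEdges_eq_choose (n : ℕ) : numEdges n = n.choose 2 := by
  rw [numEdges, ← edgeFinset_card]
  simpa using card_edgeFinset_top_eq_card_choose_two (V := Fin n)

instance : Nonempty (EdgeOrdering n) := ⟨Fintype.equivFin _⟩

/-- The edge proposed by the ordering `σ` at the (0-indexed) round `r`. -/
def edgeAt (σ : EdgeOrdering n) (r : Fin (numEdges n)) : Sym2 (Fin n) := (σ.symm r).1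

lemma edgeAt_injective (σ : EdgeOrdering n) : Function.Injective (edgeAt σ) :=
  Subtype.val_injective.comp σ.symm.injective

lemma exists_edgeAt_eq (σ : EdgeOrdering n) {e : Sym2 (Fin n)}
    (he : e ∈ (completeGraph (Fin n)).edgeFinset) : ∃ r, edgeAt σ r = e :=
  ⟨σ ⟨e, mem_edgeFinset.1 he⟩, by simp [edgeAt]⟩

lemma history_eq_map_edgeAt (σ : EdgeOrdering n) (t : ℕ) :
    history σ t =
      ((List.finRange (numEdges n)).filter fun r : Fin _ ↦ (r : ℕ) < t).map (edgeAt σ) :=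
  rfl

lemma history_congr {σ τ : EdgeOrdering n} {t : ℕ}
    (h : ∀ r : Fin (numEdges n), (r : ℕ) < t → edgeAt σ r = edgeAt τ r) :
    history σ t = history τ t := by
  rw [history_eq_map_edgeAt, history_eq_map_edgeAt]
  exact List.map_congr_left fun r hr ↦ h r (by simpa using hr)

lemma filter_finRange_lt_succ {m : ℕ} (t : Fin m) :
    (List.finRange m).filter (fun r : Fin m ↦ (r : ℕ) < t + 1) =
      (List.finRange m).filter (fun r : Fin _ ↦ (r : ℕ) < t) ++ [t] := by
  have sorted := List.pairwise_lt_finRange m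
  refine (sorted.filter _).eq_of_mem_iff ?_ fun r ↦ ?_
  · refine List.pairwise_append.2 ⟨sorted.filter _, List.pairwise_singleton _ _, ?_⟩
    simp
  · simp only [List.mem_filter, List.mem_finRange, true_and, decide_eq_true_eq, List.mem_append,
      List.mem_singleton, Fin.ext_iff]
    omega

lemma history_succ (σ : EdgeOrdering n) (t : Fin (numEdges n)) :
    history σ (t + 1) = history σ t ++ [edgeAt σ t] := by
  simp only [history_eq_map_edgeAt, filter_finRange_lt_succ, List.map_append, List.map_cons,
    List.map_nil]

lemma pathsAfter_zero (N : ℕ) (σ : EdgeOrdering n) : pathsAfter N σ 0 = initPaths n N := by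
  simp [pathsAfter, history]

lemma pathsAfter_succ (N : ℕ) (σ : EdgeOrdering n) (t : Fin (numEdges n)) :
    pathsAfter N σ (t + 1) = pathStep (pathsAfter N σ t) (edgeAt σ t) := by
  rw [pathsAfter, history_succ, List.foldl_append]
  rfl

/-- The edges that have not been proposed during the first `t` rounds. -/
def remainingEdges (σ : EdgeOrdering n) (t : Fin (numEdges n)) : Finset (Sym2 (Fin n)) :=
  (Ici t).map ⟨edgeAt σ, edgeAt_injective σ⟩

lemma card_edgeFinset_sdiff_remainingEdges_le (σ : EdgeOrdering n) (t : Fin (numEdges n)) :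
    #((completeGraph (Fin n)).edgeFinset \ remainingEdges σ t) ≤ t := by
  calc _ ≤ #((Iio t).image (edgeAt σ)) := by
        refine card_le_card fun e he ↦ ?_
        obtain ⟨he, hused⟩ := mem_sdiff.1 he
        obtain ⟨r, rfl⟩ := exists_edgeAt_eq σ he
        refine mem_image_of_mem _ (mem_Iio.2 <| lt_of_not_ge fun hr ↦ hused ?_)
        exact mem_map_of_mem _ (mem_Ici.2 hr)
    _ ≤ #(Iio t) := card_image_le
    _ = t := Fin.card_Iio t

/-- Exchanging the edges in positions `t` and `s` is a measure-preserving bijection of the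
orderings that fixes the first `t` edges. -/
lemma expect_edgeAt_eq_of_le {t s : Fin (numEdges n)} (hts : t ≤ s)
    (G : List (Sym2 (Fin n)) → Sym2 (Fin n) → ℝ) :
    𝔼 σ : EdgeOrdering n, G (history σ t) (edgeAt σ s) =
      𝔼 σ : EdgeOrdering n, G (history σ t) (edgeAt σ t) := by
  let swapEdges : EdgeOrdering n ≃ EdgeOrdering n :=
    Equiv.equivCongr (Equiv.refl _) (Equiv.swap t s)
  have edgeAt_swap (σ r) : edgeAt (swapEdges σ) r = edgeAt σ (Equiv.swap t s r) := by
    simp [swapEdges, edgeAt, Equiv.equivCongr]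
  have history_swap (σ) : history (swapEdges σ) t = history σ t := by
    refine history_congr fun r hr ↦ ?_
    have hrt : r < t := hr
    rw [edgeAt_swap, Equiv.swap_apply_of_ne_of_ne hrt.ne (hrt.trans_le hts).ne]
  refine Fintype.expect_equiv swapEdges _ _ fun σ ↦ ?_
  rw [history_swap, edgeAt_swap, Equiv.swap_apply_left]

lemma mul_expect_edgeAt (t : Fin (numEdges n)) (G : List (Sym2 (Fin n)) → Sym2 (Fin n) → ℝ) :
    ((numEdges n : ℝ) - (t : ℕ)) * 𝔼 σ : EdgeOrdering n, G (history σ t) (edgeAt σ t) =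
      𝔼 σ : EdgeOrdering n, ∑ e ∈ remainingEdges σ t, G (history σ t) e := by
  simp only [remainingEdges, sum_map, Function.Embedding.coeFn_mk]
  rw [expect_sum_comm, sum_congr rfl fun s hs ↦ expect_edgeAt_eq_of_le (mem_Ici.1 hs) G,
    sum_const, Fin.card_Ici, nsmul_eq_mul, Nat.cast_sub t.2.le]

lemma mul_expect_pathsAfter_succ_sub (N : ℕ) (t : Fin (numEdges n))
    (Ψ : (Fin n → List (Fin n)) → ℝ) :
    ((numEdges n : ℝ) - (t : ℕ)) * (𝔼 σ : EdgeOrdering n, Ψ (pathsAfter N σ (t + 1)) -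
        𝔼 σ : EdgeOrdering n, Ψ (pathsAfter N σ t)) =
      𝔼 σ : EdgeOrdering n, ∑ e ∈ remainingEdges σ t,
        (Ψ (pathStep (pathsAfter N σ t) e) - Ψ (pathsAfter N σ t)) := by
  simp only [pathsAfter_succ, ← expect_sub_distrib]
  exact mul_expect_edgeAt t fun h e ↦
    Ψ (pathStep (h.foldl pathStep (initPaths n N)) e) - Ψ (h.foldl pathStep (initPaths n N))

end RandomOrdering

section PathConfigurations

variable {ι V : Type*}

/-- The paths of the configuration `f` are pairwise disjoint lists without repetitions. Indices
carrying the empty list stand for no path at all. -/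
structure IsPathConfig (f : ι → List V) : Prop where
  nodup : ∀ j, (f j).Nodup
  eq_of_mem : ∀ {i j v}, v ∈ f i → v ∈ f j → i = j

variable [Fintype ι]

/-- The indices of the paths of `f`. -/
def activePaths (f : ι → List V) : Finset ι := {j | f j ≠ []}

/-- The vertices lying outside all paths of `f`. -/
def uncovered [Fintype V] (f : ι → List V) : Finset V := {v | ∀ j, v ∉ f j}

/-- The number of vertices of all paths of `f` together. -/
def totalLength (f : ι → List V) : ℝ := ∑ j, ((f j).length : ℝ)

/-- The average number of vertices of a path of `f`. -/
def meanLength (f : ι → List V) : ℝ := totalLength f / #(activePaths f)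

/-- The sum of the squared deviations of the path lengths from their mean. -/
def lengthVariation (f : ι → List V) : ℝ :=
  ∑ j ∈ activePaths f, (((f j).length : ℝ) - meanLength f) ^ 2

variable {f : ι → List V}

lemma mem_activePaths {j : ι} : j ∈ activePaths f ↔ f j ≠ [] := by
  simp [activePaths]

lemma mem_uncovered [Fintype V] {v : V} : v ∈ uncovered f ↔ ∀ j, v ∉ f j := by
  simp [uncovered]

lemma totalLength_nonneg (f : ι → List V) : 0 ≤ totalLength f :=
  sum_nonneg fun _ _ ↦ Nat.cast_nonneg _

lemma meanLength_nonneg (f : ι → List V) : 0 ≤ meanLength f :=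
  div_nonneg (totalLength_nonneg f) (Nat.cast_nonneg _)

lemma lengthVariation_nonneg (f : ι → List V) : 0 ≤ lengthVariation f :=
  sum_nonneg fun _ _ ↦ sq_nonneg _

lemma sum_activePaths_length {g : ℕ → ℝ} (hg : g 0 = 0) (f : ι → List V) :
    ∑ j ∈ activePaths f, g (f j).length = ∑ j, g (f j).length :=
  sum_subset (subset_univ _) fun j _ hj ↦ by
    rw [not_not.1 (mt mem_activePaths.2 hj), List.length_nil, hg]

lemma card_activePaths_mul_meanLength (f : ι → List V) :
    #(activePaths f) * meanLength f = totalLength f := by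
  refine mul_div_cancel_of_imp' fun h ↦ ?_
  rw [totalLength, ← sum_activePaths_length Nat.cast_zero, card_eq_zero.1 (Nat.cast_eq_zero.1 h),
    sum_empty]

lemma sum_activePaths_length_sub_meanLength (f : ι → List V) :
    ∑ j ∈ activePaths f, (((f j).length : ℝ) - meanLength f) = 0 := by
  rw [sum_sub_distrib, sum_activePaths_length Nat.cast_zero, sum_const, nsmul_eq_mul,
    card_activePaths_mul_meanLength, totalLength, sub_self]

lemma lengthVariation_eq (f : ι → List V) :
    lengthVariation f =
      ∑ j, ((f j).length : ℝ) ^ 2 - totalLength f ^ 2 / #(activePaths f) := by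
  have expand (j) : (((f j).length : ℝ) - meanLength f) ^ 2 =
      ((f j).length : ℝ) ^ 2 - meanLength f * (f j).length -
        meanLength f * ((f j).length - meanLength f) := by ring
  simp only [lengthVariation, expand, sum_sub_distrib, ← mul_sum]
  rw [← sum_sub_distrib, sum_activePaths_length_sub_meanLength,
    sum_activePaths_length (g := fun l ↦ (l : ℝ) ^ 2) (by simp),
    sum_activePaths_length Nat.cast_zero, ← totalLength, meanLength]
  ring

lemma IsPathConfig.card_filter_exists_mem [Fintype V] (hf : IsPathConfig f) (P : ι → Prop)
    [DecidablePred P] [DecidablePred fun v ↦ ∃ j, v ∈ f j ∧ P j] :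
    (#{v | ∃ j, v ∈ f j ∧ P j} : ℝ) = ∑ j with P j, ((f j).length : ℝ) := by
  have hU : ({v | ∃ j, v ∈ f j ∧ P j} : Finset V) =
      ({j | P j} : Finset ι).biUnion fun j ↦ (f j).toFinset := by
    ext v
    simp [and_comm]
  rw [hU, card_biUnion fun i _ j _ hij ↦ disjoint_left.2 fun v hi hj ↦
    hij (hf.eq_of_mem (List.mem_toFinset.1 hi) (List.mem_toFinset.1 hj)), Nat.cast_sum]
  exact sum_congr rfl fun j _ ↦ by rw [List.toFinset_card_of_nodup (hf.nodup j)]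

lemma IsPathConfig.card_covered [Fintype V] (hf : IsPathConfig f)
    [DecidablePred fun v ↦ ∃ j, v ∈ f j] : (#{v | ∃ j, v ∈ f j} : ℝ) = totalLength f := by
  simpa [totalLength] using hf.card_filter_exists_mem fun _ ↦ True

lemma IsPathConfig.card_uncovered [Fintype V] (hf : IsPathConfig f) :
    (#(uncovered f) : ℝ) = Fintype.card V - totalLength f := by
  have hcompl : uncovered f = ({v | ∃ j, v ∈ f j} : Finset V)ᶜ := by
    ext v
    simp [uncovered]
  rw [hcompl, card_compl, Nat.cast_sub (card_le_univ _), hf.card_covered]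

lemma IsPathConfig.totalLength_le [Fintype V] (hf : IsPathConfig f) :
    totalLength f ≤ Fintype.card V :=
  sub_nonneg.1 (hf.card_uncovered ▸ Nat.cast_nonneg _)

section Extension

variable [DecidableEq ι] {j : ι}

lemma IsPathConfig.update_cons [Fintype V] (hf : IsPathConfig f) {u : V} (hu : u ∈ uncovered f)
    (j : ι) : IsPathConfig (Function.update f j (u :: f j)) := by
  have hu := mem_uncovered.1 hu
  have mem_iff (i v) : v ∈ Function.update f j (u :: f j) i ↔ v ∈ f i ∨ i = j ∧ v = u := by
    obtain rfl | hij := eq_or_ne i j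
    · simp [or_comm]
    · simp [hij]
  refine ⟨fun i ↦ ?_, fun {a b v} ha hb ↦ ?_⟩
  · obtain rfl | hij := eq_or_ne i j
    · simpa using ⟨hu i, hf.nodup i⟩
    · simpa [hij] using hf.nodup i
  · rcases (mem_iff a v).1 ha with ha' | ⟨haj, hau⟩ <;>
      rcases (mem_iff b v).1 hb with hb' | ⟨hbj, hbu⟩
    · exact hf.eq_of_mem ha' hb'
    · exact absurd (hbu ▸ ha') (hu a)
    · exact absurd (hau ▸ hb') (hu b)
    · exact haj.trans hbj.symm

lemma activePaths_update_cons (hj : j ∈ activePaths f) (u : V) :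
    activePaths (Function.update f j (u :: f j)) = activePaths f := by
  ext i
  obtain rfl | hij := eq_or_ne i j
  · simpa [mem_activePaths] using hj
  · simp [mem_activePaths, hij]

lemma sum_length_update_cons (g : ℕ → ℝ) (f : ι → List V) (j : ι) (u : V) :
    ∑ i, g (Function.update f j (u :: f j) i).length =
      ∑ i, g (f i).length + (g ((f j).length + 1) - g (f j).length) := by
  rw [← sub_eq_iff_eq_add', ← sum_sub_distrib, sum_eq_single j]
  · simp
  · intro i _ hij
    simp [hij]
  · simp

lemma totalLength_update_cons (f : ι → List V) (j : ι) (u : V) :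
    totalLength (Function.update f j (u :: f j)) = totalLength f + 1 := by
  simpa [totalLength] using sum_length_update_cons (fun l ↦ (l : ℝ)) f j u

lemma lengthVariation_update_cons (hj : j ∈ activePaths f) (u : V) :
    lengthVariation (Function.update f j (u :: f j)) = lengthVariation f +
      (2 * ((f j).length - meanLength f) + 1 - (#(activePaths f) : ℝ)⁻¹) := by
  rw [lengthVariation_eq, sum_length_update_cons (fun l ↦ (l : ℝ) ^ 2), totalLength_update_cons,
    activePaths_update_cons hj, lengthVariation_eq, meanLength]
  push_cast
  ring

end Extension

end PathConfigurations

section PathStep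

variable {n : ℕ} {f : Fin n → List (Fin n)}

/-- The pairs `(j, u)` such that the path `f j` can be extended by the vertex `u`. -/
def extensions (f : Fin n → List (Fin n)) : Finset (Fin n × Fin n) :=
  activePaths f ×ˢ uncovered f

/-- The edge whose proposal makes the vertex `p.2` be appended to the path with index `p.1`. For an
empty path, which has no endpoint, this is the loop at `p.2`. -/
def extensionEdge (f : Fin n → List (Fin n)) (p : Fin n × Fin n) : Sym2 (Fin n) :=
  s(p.2, (f p.1).headD p.2)

lemma mem_extensions {p : Fin n × Fin n} :
    p ∈ extensions f ↔ f p.1 ≠ [] ∧ ∀ k, p.2 ∉ f k := by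
  rw [extensions, mem_product, mem_activePaths, mem_uncovered]

lemma extensionEdge_eq_of_head?_eq_some {p : Fin n × Fin n} {w : Fin n}
    (hw : (f p.1).head? = some w) : extensionEdge f p = s(p.2, w) := by
  rw [extensionEdge, List.headD_eq_head?_getD, hw, Option.getD_some]

lemma exists_head?_eq_some {p : Fin n × Fin n} (hp : p ∈ extensions f) :
    ∃ w, (f p.1).head? = some w :=
  Option.isSome_iff_exists.1 (List.isSome_head?.2 (mem_extensions.1 hp).1)

lemma IsPathConfig.extensionEdge_injOn (hf : IsPathConfig f) :
    Set.InjOn (extensionEdge f) (extensions f) := by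
  rintro ⟨j, u⟩ hp ⟨k, v⟩ hq h
  obtain ⟨w, hw⟩ := exists_head?_eq_some hp
  obtain ⟨x, hx⟩ := exists_head?_eq_some hq
  rw [extensionEdge_eq_of_head?_eq_some hw, extensionEdge_eq_of_head?_eq_some hx, Sym2.eq_iff] at h
  rcases h with ⟨rfl, rfl⟩ | ⟨rfl, -⟩
  · exact Prod.ext (hf.eq_of_mem (List.mem_of_mem_head? hw) (List.mem_of_mem_head? hx)) rfl
  · exact absurd (List.mem_of_mem_head? hx) ((mem_extensions.1 hp).2 k)

lemma extensionEdge_mem_edgeFinset {p : Fin n × Fin n} (hp : p ∈ extensions f) :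
    extensionEdge f p ∈ (completeGraph (Fin n)).edgeFinset := by
  obtain ⟨w, hw⟩ := exists_head?_eq_some hp
  have hne : p.2 ≠ w := by
    rintro rfl
    exact (mem_extensions.1 hp).2 p.1 (List.mem_of_mem_head? hw)
  simpa [extensionEdge_eq_of_head?_eq_some hw] using hne

lemma pathStep_extensionEdge (hf : IsPathConfig f) {p : Fin n × Fin n} (hp : p ∈ extensions f) :
    pathStep f (extensionEdge f p) = Function.update f p.1 (p.2 :: f p.1) := by
  obtain ⟨j, u⟩ := p
  obtain ⟨w, hw⟩ := exists_head?_eq_some hp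
  have hu := (mem_extensions.1 hp).2
  rw [extensionEdge_eq_of_head?_eq_some hw]
  have endpoints_unique {k u' w' : Fin n} (hu' : ∀ i, u' ∉ f i) (hw' : (f k).head? = some w')
      (he : s(u, w) = s(u', w')) : k = j ∧ u' = u := by
    rcases Sym2.eq_iff.1 he with ⟨rfl, rfl⟩ | ⟨rfl, rfl⟩
    · exact ⟨hf.eq_of_mem (List.mem_of_mem_head? hw') (List.mem_of_mem_head? hw), rfl⟩
    · exact absurd (List.mem_of_mem_head? hw) (hu' j)
  funext k
  rw [pathStep]
  split_ifs with h
  · obtain ⟨hu', w', hw', he⟩ := h.choose_spec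
    obtain ⟨rfl, hchoose⟩ := endpoints_unique hu' hw' he
    rw [hchoose, Function.update_self]
  · have hkj : k ≠ j := by
      rintro rfl
      exact h ⟨u, hu, w, hw, rfl⟩
    rw [Function.update_of_ne hkj]

lemma pathStep_eq_self {e : Sym2 (Fin n)} (he : e ∉ (extensions f).image (extensionEdge f)) :
    pathStep f e = f := by
  funext j
  refine dif_neg ?_
  rintro ⟨u, hu, w, hw, rfl⟩
  have hj : f j ≠ [] := List.ne_nil_of_mem (List.mem_of_mem_head? hw)
  refine he (mem_image.2 ⟨(j, u), mem_extensions.2 ⟨hj, hu⟩, ?_⟩)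
  exact extensionEdge_eq_of_head?_eq_some hw

lemma pathStep_eq_self_or_update (hf : IsPathConfig f) (e : Sym2 (Fin n)) :
    pathStep f e = f ∨
      ∃ p ∈ extensions f, pathStep f e = Function.update f p.1 (p.2 :: f p.1) := by
  by_cases he : e ∈ (extensions f).image (extensionEdge f)
  · obtain ⟨p, hp, rfl⟩ := mem_image.1 he
    exact .inr ⟨p, hp, pathStep_extensionEdge hf hp⟩
  · exact .inl (pathStep_eq_self he)

lemma isPathConfig_pathStep (hf : IsPathConfig f) (e : Sym2 (Fin n)) :
    IsPathConfig (pathStep f e) := by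
  rcases pathStep_eq_self_or_update hf e with h | ⟨p, hp, h⟩ <;> rw [h]
  · exact hf
  · exact hf.update_cons (mem_product.1 hp).2 p.1

lemma activePaths_pathStep (hf : IsPathConfig f) (e : Sym2 (Fin n)) :
    activePaths (pathStep f e) = activePaths f := by
  rcases pathStep_eq_self_or_update hf e with h | ⟨p, hp, h⟩ <;> rw [h]
  exact activePaths_update_cons (mem_product.1 hp).1 p.2

lemma sum_pathStep_sub (hf : IsPathConfig f) (R : Finset (Sym2 (Fin n)))
    (Ψ : (Fin n → List (Fin n)) → ℝ) :
    ∑ e ∈ R, (Ψ (pathStep f e) - Ψ f) =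
      ∑ p ∈ extensions f with extensionEdge f p ∈ R,
        (Ψ (Function.update f p.1 (p.2 :: f p.1)) - Ψ f) := by
  calc ∑ e ∈ R, (Ψ (pathStep f e) - Ψ f)
      = ∑ e ∈ {p ∈ extensions f | extensionEdge f p ∈ R}.image (extensionEdge f),
          (Ψ (pathStep f e) - Ψ f) := by
        refine (sum_subset (fun e he ↦ ?_) fun e heR he ↦ ?_).symm
        · obtain ⟨p, hp, rfl⟩ := mem_image.1 he
          exact (mem_filter.1 hp).2
        · rw [pathStep_eq_self, sub_self]
          contrapose! he
          obtain ⟨p, hp, rfl⟩ := mem_image.1 he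
          exact mem_image_of_mem _ (mem_filter.2 ⟨hp, heR⟩)
    _ = ∑ p ∈ extensions f with extensionEdge f p ∈ R, (Ψ (pathStep f (extensionEdge f p)) - Ψ f) :=
        sum_image (hf.extensionEdge_injOn.mono (filter_subset _ _))
    _ = _ := sum_congr rfl fun p hp ↦ by rw [pathStep_extensionEdge hf (mem_filter.1 hp).1]

lemma card_blocked_extensions_le (hf : IsPathConfig f) (R : Finset (Sym2 (Fin n))) :
    #{p ∈ extensions f | extensionEdge f p ∉ R} ≤ #((completeGraph (Fin n)).edgeFinset \ R) := by
  refine card_le_card_of_injOn (extensionEdge f) (fun p hp ↦ ?_)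
    (hf.extensionEdge_injOn.mono (filter_subset _ _))
  obtain ⟨hp, hpR⟩ := mem_filter.1 hp
  exact mem_sdiff.2 ⟨extensionEdge_mem_edgeFinset hp, hpR⟩

lemma sum_totalLength_pathStep_sub_ge (hf : IsPathConfig f) (R : Finset (Sym2 (Fin n))) :
    #(activePaths f) * ((n : ℝ) - totalLength f) - #((completeGraph (Fin n)).edgeFinset \ R) ≤
      ∑ e ∈ R, (totalLength (pathStep f e) - totalLength f) := by
  have card_split : #{p ∈ extensions f | extensionEdge f p ∈ R} +
      #{p ∈ extensions f | extensionEdge f p ∉ R} = #(activePaths f) * #(uncovered f) := by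
    rw [card_filter_add_card_filter_not, extensions, card_product]
  have card_split' := congrArg (Nat.cast (R := ℝ)) card_split
  push_cast [hf.card_uncovered, Fintype.card_fin] at card_split'
  have blocked := card_blocked_extensions_le hf R
  rify at blocked
  simp only [sum_pathStep_sub hf, totalLength_update_cons, add_sub_cancel_left, sum_const,
    nsmul_one]
  linarith

/-- Over all extensions the deviations of the path lengths from their mean cancel, so only the
extensions blocked by edges outside `R` contribute, each at most twice the mean. -/
lemma sum_lengthVariation_sub_totalLength_pathStep_sub_le (hf : IsPathConfig f)
    (R : Finset (Sym2 (Fin n))) :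
    ∑ e ∈ R, (lengthVariation (pathStep f e) - totalLength (pathStep f e) -
        (lengthVariation f - totalLength f)) ≤
      2 * meanLength f * #((completeGraph (Fin n)).edgeFinset \ R) := by
  set dev : Fin n × Fin n → ℝ := fun p ↦ (f p.1).length - meanLength f
  have sum_dev : ∑ p ∈ extensions f with extensionEdge f p ∈ R, dev p =
      -∑ p ∈ extensions f with extensionEdge f p ∉ R, dev p := by
    rw [eq_neg_iff_add_eq_zero, sum_filter_add_sum_filter_not, extensions, sum_product_right]
    simp only [dev, sum_activePaths_length_sub_meanLength, sum_const_zero]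
  rw [sum_pathStep_sub hf R fun f ↦ lengthVariation f - totalLength f]
  calc _ ≤ ∑ p ∈ extensions f with extensionEdge f p ∈ R, 2 * dev p := by
        refine sum_le_sum fun p hp ↦ ?_
        have hp := (mem_product.1 (mem_filter.1 hp).1).1
        have : 0 ≤ (#(activePaths f) : ℝ)⁻¹ := by positivity
        rw [lengthVariation_update_cons hp, totalLength_update_cons]
        linarith
    _ = ∑ p ∈ extensions f with extensionEdge f p ∉ R, 2 * -dev p := by
        rw [← mul_sum, ← mul_sum, sum_dev, sum_neg_distrib]
    _ ≤ ∑ p ∈ extensions f with extensionEdge f p ∉ R, 2 * meanLength f := by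
        gcongr with p
        simp [dev]
    _ = 2 * meanLength f * #{p ∈ extensions f | extensionEdge f p ∉ R} := by
        rw [sum_const, nsmul_eq_mul, mul_comm]
    _ ≤ _ := by
        have := meanLength_nonneg f
        gcongr
        exact card_blocked_extensions_le hf R

lemma totalLength_le_pathStep (f : Fin n → List (Fin n)) (e : Sym2 (Fin n)) :
    totalLength f ≤ totalLength (pathStep f e) := by
  refine sum_le_sum fun j _ ↦ ?_
  rw [pathStep]
  split_ifs <;> simp

end PathStep

section Evolution

variable {n N : ℕ}

lemma isPathConfig_initPaths (n N : ℕ) : IsPathConfig (initPaths n N) where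
  nodup j := by
    rw [initPaths]
    split_ifs <;> simp
  eq_of_mem {i j v} hi hj := by
    have eq_of_mem_init {k} (hk : v ∈ initPaths n N k) : v = k := by
      rw [initPaths] at hk
      split_ifs at hk <;> simp_all
    exact (eq_of_mem_init hi).symm.trans (eq_of_mem_init hj)

lemma card_activePaths_initPaths (hN : N ≤ n) : #(activePaths (initPaths n N)) = N := by
  calc #(activePaths (initPaths n N)) = #{j : Fin n | (j : ℕ) < N} := by
        congr 1
        ext j
        simp [mem_activePaths, initPaths]
    _ = N := by rw [Fin.card_filter_val_lt, min_eq_right hN]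

lemma lengthVariation_initPaths_le (n N : ℕ) :
    lengthVariation (initPaths n N) ≤ totalLength (initPaths n N) := by
  have length_sq (j) : ((initPaths n N j).length : ℝ) ^ 2 = (initPaths n N j).length := by
    rw [initPaths]
    split_ifs <;> simp
  rw [lengthVariation_eq]
  simp only [length_sq]
  exact sub_le_self _ (by positivity)

lemma isPathConfig_foldl_pathStep {f : Fin n → List (Fin n)} (hf : IsPathConfig f)
    (es : List (Sym2 (Fin n))) : IsPathConfig (es.foldl pathStep f) := by
  induction es generalizing f with
  | nil => exact hf
  | cons e _ ih => exact ih (isPathConfig_pathStep hf e)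

lemma activePaths_foldl_pathStep {f : Fin n → List (Fin n)} (hf : IsPathConfig f)
    (es : List (Sym2 (Fin n))) : activePaths (es.foldl pathStep f) = activePaths f := by
  induction es generalizing f with
  | nil => rfl
  | cons e es ih => exact (ih (isPathConfig_pathStep hf e)).trans (activePaths_pathStep hf e)

lemma isPathConfig_pathsAfter (N : ℕ) (σ : EdgeOrdering n) (t : ℕ) :
    IsPathConfig (pathsAfter N σ t) :=
  isPathConfig_foldl_pathStep (isPathConfig_initPaths n N) _

lemma card_activePaths_pathsAfter (hN : N ≤ n) (σ : EdgeOrdering n) (t : ℕ) :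
    #(activePaths (pathsAfter N σ t)) = N := by
  rw [pathsAfter, activePaths_foldl_pathStep (isPathConfig_initPaths n N),
    card_activePaths_initPaths hN]

lemma totalLength_pathsAfter_le (N : ℕ) (σ : EdgeOrdering n) (t : ℕ) :
    totalLength (pathsAfter N σ t) ≤ n := by
  simpa using (isPathConfig_pathsAfter N σ t).totalLength_le

lemma totalLength_pathsAfter_mono (N : ℕ) (σ : EdgeOrdering n) {s t : ℕ} (hst : s ≤ t)
    (ht : t ≤ numEdges n) : totalLength (pathsAfter N σ s) ≤ totalLength (pathsAfter N σ t) := by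
  induction t, hst using Nat.le_induction with
  | base => exact le_rfl
  | succ t _ ih =>
    exact (ih (Nat.le_of_succ_le ht)).trans <|
      pathsAfter_succ N σ ⟨t, ht⟩ ▸ totalLength_le_pathStep _ _

lemma mul_expect_totalLength_succ_sub_ge (hN : N ≤ n) (t : Fin (numEdges n)) :
    N * (n - 𝔼 σ : EdgeOrdering n, totalLength (pathsAfter N σ t)) - (t : ℕ) ≤
      ((numEdges n : ℝ) - (t : ℕ)) *
        (𝔼 σ : EdgeOrdering n, totalLength (pathsAfter N σ (t + 1)) -
          𝔼 σ : EdgeOrdering n, totalLength (pathsAfter N σ t)) := by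
  rw [mul_expect_pathsAfter_succ_sub]
  calc _ = 𝔼 σ : EdgeOrdering n, (N * (n - totalLength (pathsAfter N σ t)) - (t : ℕ)) := by
        rw [expect_sub_distrib, ← mul_expect, expect_sub_distrib, Fintype.expect_const,
          Fintype.expect_const]
    _ ≤ _ := expect_le_expect fun σ _ ↦ ?_
  have drift := sum_totalLength_pathStep_sub_ge (isPathConfig_pathsAfter N σ t) (remainingEdges σ t)
  have used : (#((completeGraph (Fin n)).edgeFinset \ remainingEdges σ t) : ℝ) ≤ (t : ℕ) :=
    mod_cast card_edgeFinset_sdiff_remainingEdges_le σ t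
  rw [card_activePaths_pathsAfter hN] at drift
  linarith

lemma mul_sub_expect_totalLength_le (hN : N ≤ n) {T : ℕ} (hT : T ≤ numEdges n) :
    T * (N * (n - 𝔼 σ : EdgeOrdering n, totalLength (pathsAfter N σ T)) - T) ≤
      numEdges n * (n : ℝ) := by
  set y : ℕ → ℝ := fun t ↦ 𝔼 σ : EdgeOrdering n, totalLength (pathsAfter N σ t)
  have y_mono {s t} (hst : s ≤ t) (ht : t ≤ numEdges n) : y s ≤ y t :=
    expect_le_expect fun σ _ ↦ totalLength_pathsAfter_mono N σ hst ht
  have increment_ge (t) (ht : t ∈ range T) :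
      N * (n - y T) - T ≤ numEdges n * (y (t + 1) - y t) := by
    have htT : t < T := mem_range.1 ht
    have hyT : y t ≤ y T := y_mono htT.le hT
    calc N * (n - y T) - T ≤ N * (n - y t) - t := by gcongr
      _ ≤ (numEdges n - t) * (y (t + 1) - y t) :=
        mul_expect_totalLength_succ_sub_ge hN ⟨t, htT.trans_le hT⟩
      _ ≤ numEdges n * (y (t + 1) - y t) :=
        mul_le_mul_of_nonneg_right (sub_le_self _ (Nat.cast_nonneg t)) <|
          sub_nonneg.2 (y_mono t.le_succ (htT.trans_le hT))
  calc T * (N * (n - y T) - T) = ∑ _t ∈ range T, (N * (n - y T) - T) := by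
        rw [sum_const, card_range, nsmul_eq_mul]
    _ ≤ ∑ t ∈ range T, numEdges n * (y (t + 1) - y t) := sum_le_sum increment_ge
    _ = numEdges n * (y T - y 0) := by rw [← mul_sum, sum_range_sub]
    _ ≤ numEdges n * n := by
      gcongr
      exact (sub_le_self _ (expect_nonneg fun σ _ ↦ totalLength_nonneg _)).trans <|
        expect_le univ_nonempty fun σ _ ↦ totalLength_pathsAfter_le N σ T

lemma mul_expect_lengthVariation_sub_totalLength_succ_sub_le (hN : N ≤ n)
    (t : Fin (numEdges n)) :
    ((numEdges n : ℝ) - (t : ℕ)) *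
        (𝔼 σ : EdgeOrdering n, (lengthVariation (pathsAfter N σ (t + 1)) -
            totalLength (pathsAfter N σ (t + 1))) -
          𝔼 σ : EdgeOrdering n, (lengthVariation (pathsAfter N σ t) -
            totalLength (pathsAfter N σ t))) ≤
      2 * (n / N) * (t : ℕ) := by
  rw [mul_expect_pathsAfter_succ_sub N t fun f ↦ lengthVariation f - totalLength f]
  refine expect_le univ_nonempty fun σ _ ↦ ?_
  refine (sum_lengthVariation_sub_totalLength_pathStep_sub_le (isPathConfig_pathsAfter N σ t)
    (remainingEdges σ t)).trans ?_
  rw [meanLength, card_activePaths_pathsAfter hN]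
  gcongr
  · exact totalLength_pathsAfter_le N σ t
  · exact card_edgeFinset_sdiff_remainingEdges_le σ t

lemma expect_lengthVariation_le (hN : N ≤ n) {T : ℕ} (hT : T < numEdges n) :
    𝔼 σ : EdgeOrdering n, lengthVariation (pathsAfter N σ T) ≤
      n + T * (2 * (n / N) * T / (numEdges n - T)) := by
  set y : ℕ → ℝ := fun t ↦ 𝔼 σ : EdgeOrdering n,
    (lengthVariation (pathsAfter N σ t) - totalLength (pathsAfter N σ t))
  have hTM : (0 : ℝ) < numEdges n - T := sub_pos.2 (mod_cast hT)
  have increment_le (t) (ht : t ∈ range T) :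
      y (t + 1) - y t ≤ 2 * (n / N) * T / (numEdges n - T) := by
    have htT : t < T := mem_range.1 ht
    have htT' : (numEdges n : ℝ) - T ≤ numEdges n - t := by gcongr
    calc y (t + 1) - y t ≤ 2 * (n / N) * t / (numEdges n - t) := by
          rw [le_div_iff₀' (hTM.trans_le htT')]
          exact mul_expect_lengthVariation_sub_totalLength_succ_sub_le hN ⟨t, htT.trans hT⟩
      _ ≤ _ := by gcongr
  have y_zero : y 0 ≤ 0 := expect_le univ_nonempty fun σ _ ↦ by
    rw [pathsAfter_zero]
    exact sub_nonpos.2 (lengthVariation_initPaths_le n N)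
  have y_le : y T - y 0 ≤ T * (2 * (n / N) * T / (numEdges n - T)) := by
    rw [← sum_range_sub]
    simpa using sum_le_sum increment_le
  calc 𝔼 σ : EdgeOrdering n, lengthVariation (pathsAfter N σ T)
      = 𝔼 σ : EdgeOrdering n, totalLength (pathsAfter N σ T) + y T := by
        rw [← expect_add_distrib]
        simp only [add_sub_cancel]
    _ ≤ _ := add_le_add
        (expect_le univ_nonempty fun σ _ ↦ totalLength_pathsAfter_le N σ T) (by linarith)

end Evolution

section Balance

/-- The paths of `f` cover at least `(1 - w⁻¹) * n` vertices, and at least `(1 - 2 * w⁻¹) * n` of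
these lie in paths with between `w ^ 3` and `3 * w ^ 3` vertices. -/
def CoversWithBalancedPaths {n : ℕ} (w : ℝ) (f : Fin n → List (Fin n)) : Prop :=
  (1 - w⁻¹) * n ≤ (#{v | ∃ j, v ∈ f j} : ℝ) ∧
    (1 - 2 * w⁻¹) * n ≤
      (#{v | ∃ j, v ∈ f j ∧ w ^ 3 ≤ ((f j).length : ℝ) ∧ ((f j).length : ℝ) ≤ 3 * w ^ 3} : ℝ)

/-- A bound on how far the paths of `f` are from covering all vertices and from having equal
lengths, scaled so that a value below `1` leaves at most `w⁻¹ * n` vertices uncovered and at most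
`w⁻¹ * n` vertices in paths of the wrong length. -/
def pathDefect {n : ℕ} (w : ℝ) (f : Fin n → List (Fin n)) : ℝ :=
  w / n * (n - totalLength f) + 5 / (w ^ 2 * n) * lengthVariation f

lemma mul_le_five_mul_sq_sub {q m l : ℝ} (hq : 0 < q) (hm : 19 / 10 * q ≤ m)
    (hm' : m ≤ 22 / 10 * q) (hl : ¬(q ≤ l ∧ l ≤ 3 * q)) : q * l ≤ 5 * (l - m) ^ 2 := by
  obtain hlq | hlq := lt_or_ge l q
  · nlinarith
  · have hlq' : 3 * q < l := not_le.1 fun h ↦ hl ⟨hlq, h⟩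
    nlinarith

lemma mul_sum_length_le_five_mul_lengthVariation {ι V : Type*} [Fintype ι] {f : ι → List V}
    {q : ℝ} (hq : 0 < q) (hm : 19 / 10 * q ≤ meanLength f) (hm' : meanLength f ≤ 22 / 10 * q) :
    q * ∑ j with ¬(q ≤ ((f j).length : ℝ) ∧ ((f j).length : ℝ) ≤ 3 * q), ((f j).length : ℝ) ≤
      5 * lengthVariation f := by
  rw [sum_filter, ← sum_activePaths_length
    (g := fun l ↦ if ¬(q ≤ (l : ℝ) ∧ (l : ℝ) ≤ 3 * q) then (l : ℝ) else 0) (by simp),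
    lengthVariation, mul_sum, mul_sum]
  refine sum_le_sum fun j _ ↦ ?_
  split_ifs with hj
  · rw [mul_zero]
    positivity
  · exact mul_le_five_mul_sq_sub hq hm hm' hj

section Defect

variable {n : ℕ} {f : Fin n → List (Fin n)} {w : ℝ}

lemma IsPathConfig.weighted_sub_totalLength_nonneg (hf : IsPathConfig f) (hw : 0 ≤ w) :
    0 ≤ w / n * (n - totalLength f) := by
  have total_le : totalLength f ≤ n := by simpa using hf.totalLength_le
  exact mul_nonneg (by positivity) (sub_nonneg.2 total_le)

lemma weighted_lengthVariation_nonneg (w : ℝ) (f : Fin n → List (Fin n)) :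
    0 ≤ 5 / (w ^ 2 * n) * lengthVariation f :=
  mul_nonneg (by positivity) (lengthVariation_nonneg f)

lemma IsPathConfig.pathDefect_nonneg (hf : IsPathConfig f) (hw : 0 ≤ w) : 0 ≤ pathDefect w f :=
  add_nonneg (hf.weighted_sub_totalLength_nonneg hw) (weighted_lengthVariation_nonneg w f)

lemma IsPathConfig.coversWithBalancedPaths (hf : IsPathConfig f) (hw : 20 ≤ w) (hn : 0 < n)
    (hk : 2 * w ^ 3 * #(activePaths f) ≤ n) (hk' : n ≤ 22 / 10 * w ^ 3 * #(activePaths f))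
    (hdefect : pathDefect w f < 1) :
    CoversWithBalancedPaths w f := by
  have w_pos : 0 < w := by linarith
  have n_pos : (0 : ℝ) < n := mod_cast hn
  have k_pos : (0 : ℝ) < #(activePaths f) := by
    by_contra! hk0
    exact n_pos.not_ge (hk'.trans (mul_nonpos_of_nonneg_of_nonpos (by positivity) hk0))
  have total_le : totalLength f ≤ n := by simpa using hf.totalLength_le
  have uncovered_le : n - totalLength f ≤ w⁻¹ * n := by
    have := (le_add_of_nonneg_right (weighted_lengthVariation_nonneg w f)).trans hdefect.le
    rwa [← le_div_iff₀' (by positivity), one_div_div, div_eq_inv_mul] at this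
  have variation_le : 5 * lengthVariation f ≤ w ^ 2 * n := by
    have := (le_add_of_nonneg_left (hf.weighted_sub_totalLength_nonneg w_pos.le)).trans hdefect.le
    rwa [div_mul_eq_mul_div, div_le_one (by positivity)] at this
  have w_inv_le : w⁻¹ * n ≤ 1 / 20 * n := by
    gcongr
    rw [inv_le_comm₀ w_pos (by norm_num)]
    linarith
  have mean_ge : 19 / 10 * w ^ 3 ≤ meanLength f := by
    rw [meanLength, le_div_iff₀ k_pos]
    linarith
  have mean_le : meanLength f ≤ 22 / 10 * w ^ 3 := by
    rw [meanLength, div_le_iff₀ k_pos]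
    linarith
  have unbalanced_le : ∑ j with ¬(w ^ 3 ≤ ((f j).length : ℝ) ∧ ((f j).length : ℝ) ≤ 3 * w ^ 3),
      ((f j).length : ℝ) ≤ w⁻¹ * n := by
    refine le_of_mul_le_mul_left ?_ (pow_pos w_pos 3)
    calc _ ≤ 5 * lengthVariation f :=
          mul_sum_length_le_five_mul_lengthVariation (pow_pos w_pos 3) mean_ge mean_le
      _ ≤ w ^ 2 * n := variation_le
      _ = w ^ 3 * (w⁻¹ * n) := by field_simp
  have total_split := sum_filter_add_sum_filter_not univ
    (fun j ↦ w ^ 3 ≤ ((f j).length : ℝ) ∧ ((f j).length : ℝ) ≤ 3 * w ^ 3)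
    fun j ↦ ((f j).length : ℝ)
  rw [← totalLength] at total_split
  rw [CoversWithBalancedPaths, hf.card_covered, hf.card_filter_exists_mem fun j ↦
    w ^ 3 ≤ ((f j).length : ℝ) ∧ ((f j).length : ℝ) ≤ 3 * w ^ 3]
  constructor <;> linarith

end Defect

end Balance

section Parameters

variable {w : ℝ} {n : ℕ}

/-- The number `N` of paths. -/
def pathCount (w : ℝ) (n : ℕ) : ℕ := ⌊w⁻¹ ^ 3 * n / 2⌋₊

/-- The number `t₁` of rounds. -/
def roundCount (w : ℝ) (n : ℕ) : ℕ := ⌊w ^ 5 * n⌋₊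

lemma two_mul_pow_three_mul_pathCount_le (hw : 0 < w) (n : ℕ) :
    2 * w ^ 3 * pathCount w n ≤ (n : ℝ) := by
  calc 2 * w ^ 3 * pathCount w n ≤ 2 * w ^ 3 * (w⁻¹ ^ 3 * n / 2) := by
        gcongr
        exact Nat.floor_le (by positivity)
    _ = (n : ℝ) := by field_simp

lemma le_mul_pow_three_mul_pathCount (hw : 20 ≤ w) (hn : w ^ 11 ≤ n) :
    n ≤ 22 / 10 * w ^ 3 * pathCount w n := by
  have w_pos : 0 < w := by linarith
  have pow_le : 20 ^ 8 * w ^ 3 ≤ n := by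
    calc 20 ^ 8 * w ^ 3 ≤ w ^ 8 * w ^ 3 := by gcongr
      _ = w ^ 11 := by ring
      _ ≤ n := hn
  calc (n : ℝ) ≤ 11 / 10 * n - 22 / 10 * w ^ 3 := by linarith [pow_pos w_pos 3]
    _ = 22 / 10 * w ^ 3 * (w⁻¹ ^ 3 * n / 2 - 1) := by
        field_simp
        ring
    _ ≤ 22 / 10 * w ^ 3 * pathCount w n := by
        gcongr
        exact (Nat.sub_one_lt_floor _).le

lemma roundCount_le (hw : 0 ≤ w) (n : ℕ) : roundCount w n ≤ w ^ 5 * n :=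
  Nat.floor_le (by positivity)

lemma half_le_roundCount (hw : 1 ≤ w) (hn : 2 ≤ n) : w ^ 5 * n / 2 ≤ roundCount w n := by
  have hn' : (2 : ℝ) ≤ n := mod_cast hn
  have two_le : 2 ≤ w ^ 5 * n := by nlinarith [one_le_pow₀ hw (n := 5)]
  have floor_gt : w ^ 5 * n - 1 < roundCount w n := Nat.sub_one_lt_floor _
  linarith

lemma numEdges_le (n : ℕ) : (numEdges n : ℝ) ≤ n ^ 2 / 2 := by
  rw [numEdges_eq_choose, Nat.cast_choose_two]
  nlinarith [n.cast_nonneg (α := ℝ)]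

lemma numEdges_sub_roundCount_ge (hw : 20 ≤ w) (hn : w ^ 11 ≤ n) :
    (n : ℝ) ^ 2 / 4 ≤ numEdges n - roundCount w n := by
  have pow_le : 20 ^ 6 * w ^ 5 ≤ n := by
    calc 20 ^ 6 * w ^ 5 ≤ w ^ 6 * w ^ 5 := by gcongr
      _ = w ^ 11 := by ring
      _ ≤ n := hn
  have one_le : 1 ≤ w ^ 5 := one_le_pow₀ (by linarith)
  have factor_nonneg : 0 ≤ n * ((n : ℝ) / 4 - 1 / 2 - w ^ 5) :=
    mul_nonneg n.cast_nonneg (by linarith)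
  rw [numEdges_eq_choose, Nat.cast_choose_two]
  linarith [roundCount_le (w := w) (by linarith) n]

lemma two_le_of_pow_le (hw : 20 ≤ w) (hn : w ^ 11 ≤ n) : 2 ≤ n := by
  have : (2 : ℝ) ≤ n := by
    calc (2 : ℝ) ≤ 20 ^ 11 := by norm_num
      _ ≤ w ^ 11 := by gcongr
      _ ≤ n := hn
  exact_mod_cast this

lemma pathCount_le (hw : 1 ≤ w) (n : ℕ) : pathCount w n ≤ n := by
  have bound := two_mul_pow_three_mul_pathCount_le (zero_lt_one.trans_le hw) n
  have one_le : 1 ≤ 2 * w ^ 3 := by linarith [one_le_pow₀ hw (n := 3)]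
  exact_mod_cast (le_mul_of_one_le_left (Nat.cast_nonneg _) one_le).trans bound

lemma div_pathCount_le (hw : 20 ≤ w) (hn : w ^ 11 ≤ n) :
    (n : ℝ) / pathCount w n ≤ 22 / 10 * w ^ 3 :=
  div_le_of_le_mul₀ (Nat.cast_nonneg _) (by positivity) (le_mul_pow_three_mul_pathCount hw hn)

lemma roundCount_lt_numEdges (hw : 20 ≤ w) (hn : w ^ 11 ≤ n) :
    roundCount w n < numEdges n := by
  have n_pos : 0 < n := two_pos.trans_le (two_le_of_pow_le hw hn)
  have gap_pos : (0 : ℝ) < n ^ 2 / 4 := by positivity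
  exact_mod_cast sub_pos.1 (gap_pos.trans_le (numEdges_sub_roundCount_ge hw hn))

lemma sub_expect_totalLength_le (hw : 20 ≤ w) (hn : w ^ 11 ≤ n) :
    n - 𝔼 σ : EdgeOrdering n, totalLength (pathsAfter (pathCount w n) σ (roundCount w n)) ≤
      22 / 10 * (n / w ^ 2 + w ^ 8) := by
  have w_pos : 0 < w := by linarith
  have two_le := two_le_of_pow_le hw hn
  have n_pos : (0 : ℝ) < n := mod_cast two_pos.trans_le two_le
  have T_le := roundCount_le w_pos.le n
  have T_ge := half_le_roundCount (w := w) (by linarith) two_le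
  have T_pos : (0 : ℝ) < roundCount w n := lt_of_lt_of_le (by positivity) T_ge
  have N_pos : (0 : ℝ) < pathCount w n := by
    by_contra! h
    nlinarith [le_mul_pow_three_mul_pathCount hw hn, pow_pos w_pos 3]
  have deficit := mul_sub_expect_totalLength_le (pathCount_le (w := w) (by linarith) n)
    (roundCount_lt_numEdges hw hn).le
  rw [← le_div_iff₀' T_pos, sub_le_iff_le_add, ← le_div_iff₀' N_pos] at deficit
  calc _ ≤ (numEdges n * n / roundCount w n + roundCount w n) / (pathCount w n : ℝ) := deficit
    _ ≤ (n ^ 2 / 2 * n / (w ^ 5 * n / 2) + w ^ 5 * n) / (pathCount w n : ℝ) := by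
        gcongr
        exact numEdges_le n
    _ = (n / w ^ 5 + w ^ 5) * (n / pathCount w n) := by field_simp
    _ ≤ (n / w ^ 5 + w ^ 5) * (22 / 10 * w ^ 3) := by
        gcongr
        exact div_pathCount_le hw hn
    _ = 22 / 10 * (n / w ^ 2 + w ^ 8) := by field_simp

lemma expect_lengthVariation_pathCount_le (hw : 20 ≤ w) (hn : w ^ 11 ≤ n) :
    𝔼 σ : EdgeOrdering n, lengthVariation (pathsAfter (pathCount w n) σ (roundCount w n)) ≤
      n + 18 * w ^ 13 := by
  have n_pos : (0 : ℝ) < n := mod_cast two_pos.trans_le (two_le_of_pow_le hw hn)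
  have T_le := roundCount_le (w := w) (by linarith) n
  have gap_pos : (0 : ℝ) < numEdges n - roundCount w n :=
    sub_pos.2 (mod_cast roundCount_lt_numEdges hw hn)
  refine (expect_lengthVariation_le (pathCount_le (w := w) (by linarith) n)
    (roundCount_lt_numEdges hw hn)).trans ?_
  gcongr n + ?_
  calc _ ≤ w ^ 5 * n * (2 * (22 / 10 * w ^ 3) * (w ^ 5 * n) / (n ^ 2 / 4)) := by
        gcongr
        · exact div_pathCount_le hw hn
        · exact numEdges_sub_roundCount_ge hw hn
    _ = 88 / 5 * w ^ 13 := by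
        field_simp
        ring
    _ ≤ 18 * w ^ 13 := by
        gcongr
        norm_num

lemma expect_pathDefect_le (hw : 20 ≤ w) (hn : w ^ 11 ≤ n) :
    𝔼 σ : EdgeOrdering n, pathDefect w (pathsAfter (pathCount w n) σ (roundCount w n)) ≤
      3 * w⁻¹ + 95 * (w ^ 11 / n) := by
  have w_pos : 0 < w := by linarith
  have n_pos : (0 : ℝ) < n := mod_cast two_pos.trans_le (two_le_of_pow_le hw hn)
  have w_inv_le : w⁻¹ ≤ 1 / 20 := by
    rw [inv_le_comm₀ w_pos (by norm_num)]
    linarith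
  have inv_sq_le : w⁻¹ * w⁻¹ ≤ 1 / 20 * w⁻¹ := by gcongr
  simp only [pathDefect]
  rw [expect_add_distrib, ← mul_expect, ← mul_expect, expect_sub_distrib, Fintype.expect_const]
  calc _ ≤ w / n * (22 / 10 * (n / w ^ 2 + w ^ 8)) + 5 / (w ^ 2 * n) * (n + 18 * w ^ 13) := by
        gcongr
        · exact sub_expect_totalLength_le hw hn
        · exact expect_lengthVariation_pathCount_le hw hn
    _ = 22 / 10 * w⁻¹ + 5 * (w⁻¹ * w⁻¹) + 22 / 10 * (w⁻¹ * w⁻¹) * (w ^ 11 / n) +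
          90 * (w ^ 11 / n) := by
        field_simp
        ring
    _ ≤ 22 / 10 * w⁻¹ + 5 * (1 / 20 * w⁻¹) + 22 / 10 * (1 / 20 * (1 / 20)) * (w ^ 11 / n) +
          90 * (w ^ 11 / n) := by
        gcongr
    _ ≤ 3 * w⁻¹ + 95 * (w ^ 11 / n) := by
        have : 0 ≤ w ^ 11 / n := by positivity
        linarith [inv_pos.2 w_pos]

lemma one_sub_le_pr_coversWithBalancedPaths (hw : 20 ≤ w) (hn : w ^ 11 ≤ n) :
    1 - (3 * w⁻¹ + 95 * (w ^ 11 / n)) ≤ Pr fun σ : EdgeOrdering n ↦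
      CoversWithBalancedPaths w (pathsAfter (pathCount w n) σ (roundCount w n)) := by
  have w_ge_one : 1 ≤ w := by linarith
  refine (sub_le_sub_left (expect_pathDefect_le hw hn) 1).trans (one_sub_expect_le_pr ?_ ?_)
  · exact fun σ ↦ (isPathConfig_pathsAfter _ σ _).pathDefect_nonneg (by linarith)
  · intro σ hσ
    refine (isPathConfig_pathsAfter _ σ _).coversWithBalancedPaths hw
      (two_pos.trans_le (two_le_of_pow_le hw hn)) ?_ ?_ hσ <;>
      rw [card_activePaths_pathsAfter (pathCount_le w_ge_one n)]
    · exact two_mul_pow_three_mul_pathCount_le (by linarith) n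
    · exact le_mul_pow_three_mul_pathCount hw hn

end Parameters

lemma isLittleO_pow_natCast_of_tendsto_log_div_log_log {ω : ℕ → ℝ} (hω : Tendsto ω atTop atTop)
    (hω' : Tendsto (fun n : ℕ ↦ Real.log (ω n) / Real.log (Real.log n)) atTop (nhds 0)) (k : ℕ) :
    (fun n ↦ ω n ^ k) =o[atTop] (fun n : ℕ ↦ (n : ℝ)) := by
  have log_tendsto : Tendsto (fun n : ℕ ↦ Real.log n) atTop atTop :=
    Real.tendsto_log_atTop.comp tendsto_natCast_atTop_atTop
  have le_log : ∀ᶠ n : ℕ in atTop, ω n ≤ Real.log n := by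
    filter_upwards [hω'.eventually_lt_const one_pos, hω.eventually_gt_atTop 0,
      log_tendsto.eventually_gt_atTop 1] with n hlt hω_pos hlog
    rw [div_lt_one (Real.log_pos hlog)] at hlt
    exact ((Real.log_lt_log_iff hω_pos (one_pos.trans hlog)).1 hlt).le
  have isBigO_log : ω =O[atTop] fun n : ℕ ↦ Real.log n := by
    refine .of_bound' ?_
    filter_upwards [le_log, hω.eventually_ge_atTop 0] with n hle hω_nonneg
    rw [Real.norm_of_nonneg hω_nonneg]
    exact hle.trans (le_abs_self _)
  exact (isBigO_log.pow k).trans_isLittleO <|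
    Real.isLittleO_pow_log_id_atTop.comp_tendsto tendsto_natCast_atTop_atTop

theorem statement14_general (ω : ℕ → ℝ) (hω : Tendsto ω atTop atTop)
    (hω' : (fun n ↦ ω n ^ 11) =o[atTop] (fun n : ℕ ↦ (n : ℝ))) :
    Tendsto (fun n ↦ Pr fun σ : EdgeOrdering n ↦ CoversWithBalancedPaths (ω n)
      (pathsAfter (pathCount (ω n) n) σ (roundCount (ω n) n))) atTop (nhds 1) := by
  have error_tendsto : Tendsto (fun n ↦ 1 - (3 * (ω n)⁻¹ + 95 * (ω n ^ 11 / n))) atTop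
      (nhds 1) := by
    simpa using ((hω.inv_tendsto_atTop.const_mul 3).add
      (hω'.tendsto_div_nhds_zero.const_mul 95)).const_sub 1
  refine tendsto_of_tendsto_of_tendsto_of_le_of_le' error_tendsto tendsto_const_nhds ?_ <|
    .of_forall fun n ↦ pr_le_one _
  filter_upwards [hω.eventually_ge_atTop 20, hω'.bound one_pos] with n hw hn
  refine one_sub_le_pr_coversWithBalancedPaths hw ?_
  simpa [abs_of_nonneg (show 0 ≤ ω n by linarith)] using hn

/-- with `N = ⌊ω⁻³·n/2⌋` and `t₁ = ⌊ω⁵·n⌋`, a.a.s. after round `t₁` the `N`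
paths built by the greedy procedure together contain at least `(1 − ω⁻¹)·n` vertices, and
at least `(1 − 2ω⁻¹)·n` of these vertices lie in paths containing between `ω³` and `3ω³`
vertices. -/
theorem statement14 (ω : ℕ → ℝ) (hω : Tendsto ω atTop atTop)
    (hω' : Tendsto (fun n : ℕ => Real.log (ω n) / Real.log (Real.log n)) atTop (nhds 0)) :
    Tendsto (fun n =>
        Pr (fun σ : EdgeOrdering n =>
          (1 - (ω n)⁻¹) * n ≤
            ((Finset.univ.filter (fun v : Fin n =>
              ∃ j, v ∈ pathsAfter ⌊(ω n)⁻¹ ^ 3 * n / 2⌋₊ σ ⌊ω n ^ 5 * n⌋₊ j)).card : ℝ) ∧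
          (1 - 2 * (ω n)⁻¹) * n ≤
            ((Finset.univ.filter (fun v : Fin n =>
              ∃ j, v ∈ pathsAfter ⌊(ω n)⁻¹ ^ 3 * n / 2⌋₊ σ ⌊ω n ^ 5 * n⌋₊ j ∧
                ω n ^ 3 ≤ ((pathsAfter ⌊(ω n)⁻¹ ^ 3 * n / 2⌋₊ σ ⌊ω n ^ 5 * n⌋₊ j).length : ℝ) ∧
                ((pathsAfter ⌊(ω n)⁻¹ ^ 3 * n / 2⌋₊ σ ⌊ω n ^ 5 * n⌋₊ j).length : ℝ)
                  ≤ 3 * ω n ^ 3)).card : ℝ)))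
      atTop (nhds 1) :=
  statement14_general ω hω (isLittleO_pow_natCast_of_tendsto_log_div_log_log hω hω' 11)

end
end
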